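/- arXiv:1612.04008 — 2 statements merged into one kernel-verified Lean document; each statement's English description precedes it below -/
import Mathlib

section
/- Define, for a function φ : ℝ^n → ℝ, N(φ)(x) = K(x/λ) ( ((W_m+φ)(x))_+^{(n+2s)/(n−2s)} − W_m(x)^{(n+2s)/(n−2s)} − ((n+2s)/(n−2s)) W_m(x)^{4s/(n−2s)} φ(x) ), where t_+ = max{t,0}. Then there exists a constant C > 0 independent of m such that for every φ with ‖φ‖_* ≤ 1: ‖N(φ)‖_{**} ≤ C ‖φ‖_*^{min{2, (n+2s)/(n−2s)}}. -/
/-- `X` enumerates the lattice points `{d·q : q ∈ ([0,m+1)^k × {0}) ∩ ℤ^n}` (with spacing `d = λl`). -/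
def latticeEnum (n k m : ℕ) (d : ℝ)
    (X : Fin ((m + 1) ^ k) → EuclideanSpace ℝ (Fin n)) : Prop :=
  Function.Injective X ∧
  (∀ i, ∃ q : Fin n → ℤ,
      (∀ j : Fin n, (j : ℕ) < k → 0 ≤ q j ∧ q j ≤ (m : ℤ)) ∧
      (∀ j : Fin n, k ≤ (j : ℕ) → q j = 0) ∧
      (∀ j : Fin n, X i j = d * (q j : ℝ))) ∧
  (∀ q : Fin n → ℤ,
      (∀ j : Fin n, (j : ℕ) < k → 0 ≤ q j ∧ q j ≤ (m : ℤ)) →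
      (∀ j : Fin n, k ≤ (j : ℕ) → q j = 0) →
      ∃ i, ∀ j : Fin n, X i j = d * (q j : ℝ))

/-- Conditions (H₁)–(H₃) on `K`, with `K(0) = 1`: positivity and boundedness, `C^{1,1}`
regularity, `1`-periodicity in the first `k` variables, and the expansion
`K(x) = 1 + Σ aᵢ|xᵢ|^β + R(x)` near the critical point `0`. -/
def KHyp (n k : ℕ) (β : ℝ) (a : Fin n → ℝ)
    (K : EuclideanSpace ℝ (Fin n) → ℝ) : Prop :=
  (∃ K₀ K₁ : ℝ, 0 < K₀ ∧ ∀ x, K₀ ≤ K x ∧ K x ≤ K₁) ∧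
  ContDiff ℝ 1 K ∧ (∃ L : NNReal, LipschitzWith L (fderiv ℝ K)) ∧
  (∀ x : EuclideanSpace ℝ (Fin n), ∀ j : Fin n, (j : ℕ) < k →
      K (x + EuclideanSpace.single j (1 : ℝ)) = K x) ∧
  K 0 = 1 ∧ fderiv ℝ K 0 = 0 ∧
  (∀ i, a i ≠ 0) ∧ (∑ i, a i) < 0 ∧
  ∃ R : EuclideanSpace ℝ (Fin n) → ℝ,
    (∀ᶠ x in nhds 0, K x = 1 + (∑ i, a i * |x i| ^ β) + R x) ∧
    ContDiff ℝ (⌊β⌋₊ - 1 : ℕ) R ∧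
    (∃ L : NNReal, LipschitzWith L (iteratedFDeriv ℝ (⌊β⌋₊ - 1) R)) ∧
    Filter.Tendsto
      (fun y : EuclideanSpace ℝ (Fin n) =>
        ∑ j ∈ Finset.range (⌊β⌋₊ + 1), ‖iteratedFDeriv ℝ j R y‖ * ‖y‖ ^ (-β + (j : ℝ)))
      (nhdsWithin 0 {0}ᶜ) (nhds 0)

/-!
With `p = (n+2s)/(n-2s)` and `α = (n-2s)/2`, the Taylor remainder
`(w+f)₊ ^ p - w ^ p - p w ^ (p-1) f` is at most `C |f| ^ p` if `p ≤ 2` and at most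
`C (w+|f|) ^ (p-2) |f| ^ 2` if `p ≥ 2`. Since `τ ≤ α`, the bubbles satisfy
`W ≤ A ∑ᵢ rᵢ ^ (-(α+τ))` with `rᵢ = 1 + |x - Xᵢ|`, and `|φ| ≤ ν γ ∑ᵢ rᵢ ^ (-(α+τ))` with
`γ ≤ 1`, so in both cases the remainder is at most `C ν ^ min 2 p γ (∑ᵢ rᵢ ^ (-(α+τ))) ^ p`.
Hölder's inequality with weights `rᵢ ^ (-τ)` bounds the last factor by
`(∑ᵢ rᵢ ^ (-τ)) ^ (p-1) ∑ᵢ rᵢ ^ (-(αp+τ))`, and `∑ᵢ rᵢ ^ (-τ)` is bounded independently of the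
number of points because they project to distinct nodes of a `k`-dimensional lattice and `τ > k`.
-/

open Function Set

section PowerRemainder

variable {p q w f a b : ℝ}

lemma rpow_add_mul_rpow_sub_one_mul_sub_le (hp : 1 ≤ p) (ha : 0 ≤ a) (hb : 0 ≤ b) :
    a ^ p + p * a ^ (p - 1) * (b - a) ≤ b ^ p := by
  rcases ha.eq_or_lt with rfl | ha'
  · rcases hp.eq_or_lt with rfl | hp'
    · simp
    · simpa [Real.zero_rpow (show p ≠ 0 by linarith), Real.zero_rpow (sub_pos.2 hp').ne']
        using Real.rpow_nonneg hb p
  · have bernoulli : 1 + p * (b / a - 1) ≤ (b / a) ^ p := by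
      simpa using one_add_mul_self_le_rpow_one_add (s := b / a - 1)
        (by linarith [div_nonneg hb ha]) hp
    rw [Real.div_rpow hb ha, le_div_iff₀ (Real.rpow_pos_of_pos ha' p)] at bernoulli
    calc a ^ p + p * a ^ (p - 1) * (b - a) = (1 + p * (b / a - 1)) * a ^ p := by
          rw [Real.rpow_sub_one ha'.ne']; field_simp
      _ ≤ b ^ p := bernoulli

lemma abs_rpow_sub_rpow_le_abs_sub_rpow (hq₀ : 0 ≤ q) (hq₁ : q ≤ 1) (ha : 0 ≤ a) (hb : 0 ≤ b) :
    |a ^ q - b ^ q| ≤ |a - b| ^ q := by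
  wlog hba : b ≤ a generalizing a b
  · rw [abs_sub_comm, abs_sub_comm a]
    exact this hb ha (le_of_not_ge hba)
  have subadd := Real.rpow_add_le_add_rpow hb (sub_nonneg.2 hba) hq₀ hq₁
  rw [add_sub_cancel] at subadd
  rw [abs_of_nonneg (sub_nonneg.2 (Real.rpow_le_rpow hb hba hq₀)), abs_of_nonneg (by linarith)]
  linarith

lemma abs_rpow_sub_rpow_le_mul_abs_sub {H : ℝ} (hq : 1 ≤ q) (ha : a ∈ Icc 0 H)
    (hb : b ∈ Icc 0 H) : |a ^ q - b ^ q| ≤ q * H ^ (q - 1) * |a - b| := by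
  wlog hba : b ≤ a generalizing a b
  · rw [abs_sub_comm, abs_sub_comm a]
    exact this hb ha (le_of_not_ge hba)
  have hmono := Real.rpow_le_rpow hb.1 hba (zero_le_one.trans hq)
  have tangent := rpow_add_mul_rpow_sub_one_mul_sub_le hq ha.1 hb.1
  rw [abs_of_nonneg (sub_nonneg.2 hmono), abs_of_nonneg (sub_nonneg.2 hba)]
  calc a ^ q - b ^ q ≤ q * a ^ (q - 1) * (a - b) := by linarith
    _ ≤ q * H ^ (q - 1) * (a - b) := by
      have ha₀ : 0 ≤ a := ha.1
      gcongr
      exact ha.2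

/-- The remainder of the first-order Taylor expansion of `t ↦ (max t 0) ^ p` at `w ≥ 0`, for the
increment `f`. -/
noncomputable def powerRemainder (p w f : ℝ) : ℝ :=
  max (w + f) 0 ^ p - w ^ p - p * w ^ (p - 1) * f

lemma abs_max_add_zero_sub_le (hw : 0 ≤ w) : |max (w + f) 0 - w| ≤ |f| := by
  simpa [max_eq_left hw] using abs_max_sub_max_le_abs (w + f) w 0

/- The remainder is nonnegative by the tangent line inequality at `w`, and bounded above by the
one at `max (w + f) 0`. -/
lemma abs_powerRemainder_le (hp : 1 < p) (hw : 0 ≤ w) :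
    |powerRemainder p w f| ≤ p * |max (w + f) 0 ^ (p - 1) - w ^ (p - 1)| * |f| := by
  unfold powerRemainder
  set b := max (w + f) 0 with hb
  have hb₀ : 0 ≤ b := le_max_right _ _
  have tangent_at_w := rpow_add_mul_rpow_sub_one_mul_sub_le hp.le hw hb₀
  have tangent_at_b := rpow_add_mul_rpow_sub_one_mul_sub_le hp.le hb₀ hw
  have increment_le : p * w ^ (p - 1) * f ≤ p * w ^ (p - 1) * (b - w) := by
    gcongr
    linarith [le_max_left (w + f) 0]
  have slope_mul_increment : b ^ (p - 1) * (w - b) = b ^ (p - 1) * (-f) := by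
    rcases le_total (w + f) 0 with h | h
    · rw [hb, max_eq_right h, Real.zero_rpow (sub_pos.2 hp).ne', zero_mul, zero_mul]
    · rw [hb, max_eq_left h]; ring
  rw [mul_assoc, slope_mul_increment] at tangent_at_b
  rw [abs_of_nonneg (by linarith)]
  calc b ^ p - w ^ p - p * w ^ (p - 1) * f ≤ p * ((b ^ (p - 1) - w ^ (p - 1)) * f) := by linarith
    _ ≤ p * (|b ^ (p - 1) - w ^ (p - 1)| * |f|) := by
      rw [← abs_mul]
      gcongr
      exact le_abs_self _
    _ = _ := (mul_assoc _ _ _).symm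

lemma abs_powerRemainder_le_rpow (hp₁ : 1 < p) (hp₂ : p ≤ 2) (hw : 0 ≤ w) :
    |powerRemainder p w f| ≤ p * |f| ^ p := by
  have slope_le : |max (w + f) 0 ^ (p - 1) - w ^ (p - 1)| ≤ |f| ^ (p - 1) :=
    (abs_rpow_sub_rpow_le_abs_sub_rpow (by linarith) (by linarith) (le_max_right _ _) hw).trans <|
      Real.rpow_le_rpow (abs_nonneg _) (abs_max_add_zero_sub_le hw) (by linarith)
  calc |powerRemainder p w f| ≤ p * |max (w + f) 0 ^ (p - 1) - w ^ (p - 1)| * |f| :=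
        abs_powerRemainder_le hp₁ hw
    _ ≤ p * |f| ^ (p - 1) * |f| := by gcongr
    _ = p * |f| ^ p := by
      rw [mul_assoc, ← Real.rpow_add_one' (abs_nonneg f) (by linarith), sub_add_cancel]

lemma abs_powerRemainder_le_sq (hp : 2 ≤ p) (hw : 0 ≤ w) :
    |powerRemainder p w f| ≤ p * (p - 1) * (w + |f|) ^ (p - 2) * |f| ^ 2 := by
  have hp₁ : 0 ≤ p - 1 := by linarith
  have slope_le : |max (w + f) 0 ^ (p - 1) - w ^ (p - 1)|
      ≤ (p - 1) * (w + |f|) ^ (p - 2) * |max (w + f) 0 - w| := by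
    have h := abs_rpow_sub_rpow_le_mul_abs_sub (q := p - 1) (H := w + |f|) (by linarith)
      ⟨le_max_right (w + f) 0, max_le (by linarith [le_abs_self f]) (by positivity)⟩
      ⟨hw, le_add_of_nonneg_right (abs_nonneg f)⟩
    rwa [show p - 1 - 1 = p - 2 by ring] at h
  have increment_le : |max (w + f) 0 - w| ≤ |f| := abs_max_add_zero_sub_le hw
  calc |powerRemainder p w f| ≤ p * |max (w + f) 0 ^ (p - 1) - w ^ (p - 1)| * |f| :=
        abs_powerRemainder_le (by linarith) hw
    _ ≤ p * ((p - 1) * (w + |f|) ^ (p - 2) * |max (w + f) 0 - w|) * |f| := by gcongr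
    _ ≤ p * ((p - 1) * (w + |f|) ^ (p - 2) * |f|) * |f| := by gcongr
    _ = p * (p - 1) * (w + |f|) ^ (p - 2) * |f| ^ 2 := by ring

variable {A S g ν : ℝ}

lemma rpow_le_rpow_mul_of_abs_le (hp : 1 ≤ p) (hS : 0 ≤ S) (hg : g ∈ Icc 0 1) (hν : 0 ≤ ν)
    (hf : |f| ≤ ν * (g * S)) : |f| ^ p ≤ ν ^ p * (g * S ^ p) := by
  obtain ⟨hg₀, hg₁⟩ := hg
  calc |f| ^ p ≤ (ν * (g * S)) ^ p := Real.rpow_le_rpow (abs_nonneg f) hf (by linarith)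
    _ = ν ^ p * (g ^ p * S ^ p) := by rw [Real.mul_rpow hν (by positivity), Real.mul_rpow hg₀ hS]
    _ ≤ ν ^ p * (g * S ^ p) := by
      gcongr
      exact Real.rpow_le_self_of_le_one hg₀ hg₁ hp

lemma rpow_mul_sq_le_of_abs_le (hp : 2 ≤ p) (hA : 0 ≤ A) (hw : 0 ≤ w) (hS : 0 ≤ S)
    (hwS : w ≤ A * S) (hg : g ∈ Icc 0 1) (hν : ν ∈ Icc 0 1) (hf : |f| ≤ ν * (g * S)) :
    (w + |f|) ^ (p - 2) * |f| ^ 2 ≤ (A + 1) ^ (p - 2) * (ν ^ 2 * (g * S ^ p)) := by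
  obtain ⟨hg₀, hg₁⟩ := hg
  obtain ⟨_, hν₁⟩ := hν
  have hfS : |f| ≤ S := hf.trans <| by
    calc ν * (g * S) ≤ 1 * (1 * S) := by gcongr
      _ = S := by ring
  calc (w + |f|) ^ (p - 2) * |f| ^ 2
      ≤ ((A + 1) * S) ^ (p - 2) * (ν * (g * S)) ^ 2 := by
        gcongr
        linarith
    _ = (A + 1) ^ (p - 2) * (ν ^ 2 * (g * g * (S ^ (p - 2) * S ^ 2))) := by
        rw [Real.mul_rpow (by linarith) hS]; ring
    _ ≤ (A + 1) ^ (p - 2) * (ν ^ 2 * (g * 1 * (S ^ (p - 2) * S ^ 2))) := by gcongr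
    _ = (A + 1) ^ (p - 2) * (ν ^ 2 * (g * S ^ p)) := by
        rw [mul_one, ← Real.rpow_natCast S 2, ← Real.rpow_add_of_nonneg hS (by linarith) (by simp)]
        norm_num

lemma abs_powerRemainder_le_of_le_mul (hp : 1 < p) (hA : 0 ≤ A) (hw : 0 ≤ w) (hS : 0 ≤ S)
    (hwS : w ≤ A * S) (hg : g ∈ Icc 0 1) (hν : ν ∈ Icc 0 1) (hf : |f| ≤ ν * (g * S)) :
    |powerRemainder p w f| ≤ p ^ 2 * (A + 1) ^ p * (ν ^ min 2 p * (g * S ^ p)) := by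
  have hgS : 0 ≤ g * S ^ p := mul_nonneg hg.1 (Real.rpow_nonneg hS p)
  have hν₀ : 0 ≤ ν := hν.1
  rcases le_total p 2 with hp₂ | hp₂
  · have const_le : p ≤ p ^ 2 * (A + 1) ^ p := by
      nlinarith [Real.one_le_rpow (show 1 ≤ A + 1 by linarith) (zero_le_one.trans hp.le)]
    rw [min_eq_right hp₂]
    calc |powerRemainder p w f| ≤ p * |f| ^ p := abs_powerRemainder_le_rpow hp hp₂ hw
      _ ≤ p * (ν ^ p * (g * S ^ p)) := by
        gcongr
        exact rpow_le_rpow_mul_of_abs_le hp.le hS hg hν₀ hf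
      _ ≤ _ := by gcongr
  · have const_le : p * (p - 1) * (A + 1) ^ (p - 2) ≤ p ^ 2 * (A + 1) ^ p := by
      gcongr
      · linarith [mul_self_nonneg p]
      · linarith
      · linarith
    have : 0 ≤ p - 1 := by linarith
    rw [min_eq_left hp₂, Real.rpow_two]
    calc |powerRemainder p w f| ≤ p * (p - 1) * ((w + |f|) ^ (p - 2) * |f| ^ 2) := by
          rw [← mul_assoc]
          exact abs_powerRemainder_le_sq hp₂ hw
      _ ≤ p * (p - 1) * ((A + 1) ^ (p - 2) * (ν ^ 2 * (g * S ^ p))) := by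
        exact mul_le_mul_of_nonneg_left (rpow_mul_sq_le_of_abs_le hp₂ hA hw hS hwS hg hν hf)
          (by positivity)
      _ ≤ _ := by
        rw [← mul_assoc]
        gcongr

end PowerRemainder

section WeightSum

variable {E ι κ : Type*} [SeminormedAddCommGroup E] [Fintype ι] [Fintype κ]

/-- The sum of the polynomial weights of decay order `a` centred at the points `X i`. The norms
`‖·‖_*` and `‖·‖_{**}` are suprema relative to `γ` times such a sum. -/
noncomputable def weightSum (X : ι → E) (a : ℝ) (x : E) : ℝ :=
  ∑ i, (1 + ‖x - X i‖) ^ (-a)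

lemma weightSum_nonneg (X : ι → E) (a : ℝ) (x : E) : 0 ≤ weightSum X a x :=
  Finset.sum_nonneg fun _ _ ↦ by positivity

lemma sum_mul_rpow_le_rpow_sum_mul_sum {p : ℝ} (hp : 1 ≤ p) {w f : ι → ℝ} (hw : ∀ i, 0 ≤ w i)
    (hf : ∀ i, 0 ≤ f i) :
    (∑ i, w i * f i) ^ p ≤ (∑ i, w i) ^ (p - 1) * ∑ i, w i * f i ^ p := by
  have hp₀ : p ≠ 0 := by linarith
  have hw_sum : 0 ≤ ∑ i, w i := Finset.sum_nonneg fun i _ ↦ hw i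
  have hwf_sum : 0 ≤ ∑ i, w i * f i := Finset.sum_nonneg fun i _ ↦ mul_nonneg (hw i) (hf i)
  have hwfp_sum : 0 ≤ ∑ i, w i * f i ^ p :=
    Finset.sum_nonneg fun i _ ↦ mul_nonneg (hw i) (Real.rpow_nonneg (hf i) p)
  calc (∑ i, w i * f i) ^ p
      ≤ ((∑ i, w i) ^ (1 - p⁻¹) * (∑ i, w i * f i ^ p) ^ p⁻¹) ^ p :=
        Real.rpow_le_rpow hwf_sum (Real.inner_le_weight_mul_Lp_of_nonneg _ hp w f hw hf)
          (by linarith)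
    _ = (∑ i, w i) ^ (p - 1) * ∑ i, w i * f i ^ p := by
        rw [Real.mul_rpow (by positivity) (by positivity), ← Real.rpow_mul hw_sum,
          Real.rpow_inv_rpow hwfp_sum hp₀, sub_mul, inv_mul_cancel₀ hp₀, one_mul]

lemma weightSum_add_rpow_le {p : ℝ} (hp : 1 ≤ p) (X : ι → E) (α τ : ℝ) (x : E) :
    weightSum X (α + τ) x ^ p ≤ weightSum X τ x ^ (p - 1) * weightSum X (α * p + τ) x := by
  have hr (i : ι) : 0 < 1 + ‖x - X i‖ := by positivity
  have factor (i : ι) : (1 + ‖x - X i‖) ^ (-(α + τ)) =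
      (1 + ‖x - X i‖) ^ (-τ) * (1 + ‖x - X i‖) ^ (-α) := by
    rw [← Real.rpow_add (hr i), neg_add_rev]
  have factor_rpow (i : ι) : (1 + ‖x - X i‖) ^ (-(α * p + τ)) =
      (1 + ‖x - X i‖) ^ (-τ) * ((1 + ‖x - X i‖) ^ (-α)) ^ p := by
    rw [← Real.rpow_mul (hr i).le, ← Real.rpow_add (hr i), neg_add_rev, neg_mul]
  simp only [weightSum, factor, factor_rpow]
  exact sum_mul_rpow_le_rpow_sum_mul_sum hp (fun i ↦ by positivity) (fun i ↦ by positivity)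

/-- The points `X i` project under `π` to pairwise distinct nodes of the lattice `d ℤ^κ`; in the
application `π` keeps the coordinates along which the lattice extends. -/
def LiesOverLattice (π : E → κ → ℝ) (d : ℝ) (X : ι → E) : Prop :=
  ∃ q : ι → κ → ℤ, Injective q ∧ ∀ i, π (X i) = d • fun j ↦ (q i j : ℝ)

lemma summable_one_add_norm_rpow_neg {τ : ℝ} (hτ : Fintype.card κ < τ) :
    Summable fun z : κ → ℤ ↦ (1 + ‖z‖) ^ (-τ) := by
  let B := (Pi.basisFun ℝ κ).restrictScalars ℤ
  have finrank_eq : Module.finrank ℤ (Submodule.span ℤ (range (Pi.basisFun ℝ κ))) =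
      Fintype.card κ := Module.finrank_eq_card_basis B
  have coe_eq (z : κ → ℤ) : (B.equivFun.symm z : κ → ℝ) = fun j ↦ (z j : ℝ) := by
    ext j
    classical
    simp [B, Module.Basis.equivFun_symm_apply, Finset.sum_apply, Pi.basisFun_apply,
      Pi.single_apply]
  have norm_eq (z : κ → ℤ) : ‖B.equivFun.symm z‖ = ‖z‖ := by
    rw [Submodule.coe_norm, coe_eq]
    rfl
  have hsum : Summable fun z : κ → ℤ ↦ ‖z‖ ^ (-τ) := by
    have := ZLattice.summable_norm_rpow _ (-τ) (by rw [finrank_eq]; linarith)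
    simpa only [comp_def, norm_eq] using this.comp_injective B.equivFun.symm.injective
  refine hsum.of_norm_bounded_eventually ?_
  filter_upwards [(finite_singleton (0 : κ → ℤ)).compl_mem_cofinite] with z hz
  rw [Real.norm_of_nonneg (by positivity)]
  exact Real.rpow_le_rpow_of_nonpos (norm_pos_iff.2 hz) (by linarith)
    (by linarith [(Fintype.card κ).cast_nonneg (α := ℝ)])

lemma one_add_norm_sub_round_le {d : ℝ} (hd : 1 ≤ d) (t : κ → ℝ) (z : κ → ℤ) :
    (1 + ‖z - fun j ↦ round (t j / d)‖) / 2 ≤ 1 + ‖t - d • fun j ↦ (z j : ℝ)‖ := by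
  have hd₀ : 0 < d := zero_lt_one.trans_le hd
  suffices ‖z - fun j ↦ round (t j / d)‖ ≤ ‖t - d • fun j ↦ (z j : ℝ)‖ + 1 by
    linarith [norm_nonneg (t - d • fun j ↦ (z j : ℝ))]
  refine (pi_norm_le_iff_of_nonneg (by positivity)).2 fun j ↦ ?_
  have scaling : |t j / d - z j| ≤ |t j - d * z j| := by
    rw [show t j - d * z j = d * (t j / d - z j) by field_simp, abs_mul, abs_of_pos hd₀]
    exact le_mul_of_one_le_left (abs_nonneg _) hd
  calc ‖z j - round (t j / d)‖ = |(z j : ℝ) - round (t j / d)| := by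
        rw [← Int.norm_cast_real, Int.cast_sub, Real.norm_eq_abs]
    _ ≤ |(z j : ℝ) - t j / d| + |t j / d - round (t j / d)| := abs_sub_le _ _ _
    _ ≤ |t j - d * z j| + 1 := by
        rw [abs_sub_comm (z j : ℝ)]
        linarith [abs_sub_round (t j / d)]
    _ ≤ ‖t - d • fun j ↦ (z j : ℝ)‖ + 1 := by
        gcongr
        exact norm_le_pi_norm (t - d • fun j ↦ (z j : ℝ)) j

lemma LiesOverLattice.weightSum_le {π : E → κ → ℝ} {d τ : ℝ} {X : ι → E}
    (hX : LiesOverLattice π d X) (hπ : LipschitzWith 1 π) (hd : 1 ≤ d)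
    (hτ : Fintype.card κ < τ) (x : E) :
    weightSum X τ x ≤ 2 ^ τ * ∑' z : κ → ℤ, (1 + ‖z‖) ^ (-τ) := by
  obtain ⟨q, hq_inj, hXq⟩ := hX
  have hτ₀ : 0 ≤ τ := (Nat.cast_nonneg _).trans hτ.le
  let z (i : ι) : κ → ℤ := q i - fun j ↦ round (π x j / d)
  have hz_inj : Injective z := fun _ _ h ↦ hq_inj (sub_left_injective h)
  have term_le (i : ι) : (1 + ‖x - X i‖) ^ (-τ) ≤ 2 ^ τ * (1 + ‖z i‖) ^ (-τ) := by
    have hdist : (1 + ‖z i‖) / 2 ≤ 1 + ‖x - X i‖ := by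
      have hπ_le : ‖π x - π (X i)‖ ≤ ‖x - X i‖ := by simpa using hπ.norm_sub_le x (X i)
      rw [hXq] at hπ_le
      linarith [one_add_norm_sub_round_le hd (π x) (q i)]
    calc (1 + ‖x - X i‖) ^ (-τ) ≤ ((1 + ‖z i‖) / 2) ^ (-τ) :=
          Real.rpow_le_rpow_of_nonpos (by positivity) hdist (neg_nonpos.2 hτ₀)
      _ = 2 ^ τ * (1 + ‖z i‖) ^ (-τ) := by
          rw [Real.div_rpow (by positivity) zero_le_two, Real.rpow_neg zero_le_two, div_inv_eq_mul,
            mul_comm]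
  have hsum := summable_one_add_norm_rpow_neg hτ
  calc weightSum X τ x ≤ ∑ i, 2 ^ τ * (1 + ‖z i‖) ^ (-τ) := Finset.sum_le_sum fun i _ ↦ term_le i
    _ = 2 ^ τ * ∑' i, (1 + ‖z i‖) ^ (-τ) := by rw [← Finset.mul_sum, tsum_fintype]
    _ ≤ 2 ^ τ * ∑' z : κ → ℤ, (1 + ‖z‖) ^ (-τ) := by
        gcongr
        exact tsum_comp_le_tsum_of_inj hsum (fun _ ↦ by positivity) hz_inj

end WeightSum

section Bubble

variable {E ι : Type*} [SeminormedAddCommGroup E] [Fintype ι] {C₀ C₁ C₂ α τ : ℝ}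

/-- The bubble `U_{ξ,Λ}` with concentration parameter `Λ`, centre `ξ` and normalizing constant
`C₀`, where `α` stands for `(n-2s)/2`. -/
noncomputable def bubble (C₀ α : ℝ) (ξ : E) (Λ : ℝ) (x : E) : ℝ :=
  C₀ * (Λ / (1 + Λ ^ 2 * ‖x - ξ‖ ^ 2)) ^ α

/-- The approximate solution `W_m`: the sum of the bubbles centred at the points `P i`. -/
noncomputable def bubbleSum (C₀ α : ℝ) (P : ι → E) (Λ : ι → ℝ) (x : E) : ℝ :=
  ∑ i, bubble C₀ α (P i) (Λ i) x

lemma div_one_add_sq_mul_sq_le {Λ ρ r : ℝ} (hC₁ : 0 < C₁) (hΛ : Λ ∈ Icc C₁ C₂) (hr : 0 < r)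
    (hrρ : r ≤ 3 / 2 + ρ) : Λ / (1 + Λ ^ 2 * ρ ^ 2) ≤ (5 * C₂ + 2 / C₁) / r ^ 2 := by
  have hΛ₀ : 0 < Λ := hC₁.trans_le hΛ.1
  have hC₂ : 0 < C₂ := hΛ₀.trans_le hΛ.2
  have hr_sq : r ^ 2 ≤ 5 + 2 * ρ ^ 2 := by nlinarith [sq_nonneg (ρ - 3 / 2)]
  have hΛ_le : Λ ≤ Λ ^ 2 / C₁ := by
    rw [le_div_iff₀ hC₁, sq]
    exact mul_le_mul_of_nonneg_left hΛ.1 hΛ₀.le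
  rw [div_le_div_iff₀ (by positivity) (by positivity)]
  calc Λ * r ^ 2 ≤ Λ * (5 + 2 * ρ ^ 2) := by gcongr
    _ = 5 * Λ + 2 * (Λ * ρ ^ 2) := by ring
    _ ≤ 5 * C₂ + 2 * (Λ ^ 2 / C₁ * ρ ^ 2) := by
      gcongr
      exact hΛ.2
    _ ≤ 5 * C₂ + 2 * (Λ ^ 2 / C₁ * ρ ^ 2) + (5 * C₂ * (Λ ^ 2 * ρ ^ 2) + 2 / C₁) :=
      le_add_of_nonneg_right (by positivity)
    _ = (5 * C₂ + 2 / C₁) * (1 + Λ ^ 2 * ρ ^ 2) := by ring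

lemma bubble_le {Λ : ℝ} {P X : E} (hC₀ : 0 ≤ C₀) (hC₁ : 0 < C₁) (hα : 0 ≤ α)
    (hΛ : Λ ∈ Icc C₁ C₂) (hP : ‖P - X‖ ≤ 1 / 2) (x : E) :
    bubble C₀ α P Λ x ≤ C₀ * (5 * C₂ + 2 / C₁) ^ α * (1 + ‖x - X‖) ^ (-(2 * α)) := by
  have hΛ₀ : 0 < Λ := hC₁.trans_le hΛ.1
  have hC₂ : 0 < C₂ := hΛ₀.trans_le hΛ.2
  have hr : 0 < 1 + ‖x - X‖ := by positivity
  have hr_le : 1 + ‖x - X‖ ≤ 3 / 2 + ‖x - P‖ := by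
    linarith [norm_sub_le_norm_sub_add_norm_sub x P X]
  rw [bubble, mul_assoc]
  gcongr
  calc (Λ / (1 + Λ ^ 2 * ‖x - P‖ ^ 2)) ^ α
      ≤ ((5 * C₂ + 2 / C₁) / (1 + ‖x - X‖) ^ 2) ^ α :=
        Real.rpow_le_rpow (by positivity) (div_one_add_sq_mul_sq_le hC₁ hΛ hr hr_le) hα
    _ = (5 * C₂ + 2 / C₁) ^ α * (1 + ‖x - X‖) ^ (-(2 * α)) := by
        rw [Real.div_rpow (by positivity) (by positivity), Real.rpow_neg hr.le,
          Real.rpow_mul hr.le, Real.rpow_two, div_eq_mul_inv]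

lemma bubbleSum_nonneg {Λ : ι → ℝ} (hC₀ : 0 ≤ C₀) (hΛ : ∀ i, 0 ≤ Λ i) (P : ι → E) (x : E) :
    0 ≤ bubbleSum C₀ α P Λ x :=
  Finset.sum_nonneg fun i _ ↦ by
    have := hΛ i
    unfold bubble
    positivity

lemma bubbleSum_le {Λ : ι → ℝ} {P X : ι → E} (hC₀ : 0 ≤ C₀) (hC₁ : 0 < C₁) (hα : 0 ≤ α)
    (hτα : τ ≤ α) (hΛ : ∀ i, Λ i ∈ Icc C₁ C₂) (hP : ∀ i, ‖P i - X i‖ ≤ 1 / 2) (x : E) :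
    bubbleSum C₀ α P Λ x ≤ C₀ * (5 * C₂ + 2 / C₁) ^ α * weightSum X (α + τ) x := by
  rw [bubbleSum, weightSum, Finset.mul_sum]
  refine Finset.sum_le_sum fun i _ ↦ (bubble_le hC₀ hC₁ hα (hΛ i) (hP i) x).trans ?_
  have hC₂ : 0 < C₂ := hC₁.trans_le ((hΛ i).1.trans (hΛ i).2)
  gcongr
  · linarith [norm_nonneg (x - X i)]
  · linarith

end Bubble

lemma latticeEnum.liesOverLattice {n k m : ℕ} {d : ℝ}
    {X : Fin ((m + 1) ^ k) → EuclideanSpace ℝ (Fin n)} (hX : latticeEnum n k m d X)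
    (hkn : k ≤ n) : LiesOverLattice (fun x (j : Fin k) ↦ x (Fin.castLE hkn j)) d X := by
  obtain ⟨hX_inj, hX_mem, -⟩ := hX
  choose q _ hq_zero hXq using hX_mem
  refine ⟨fun i j ↦ q i (Fin.castLE hkn j), fun a b hab ↦ hX_inj ?_, fun i ↦ ?_⟩
  · ext j
    have : q a j = q b j := by
      by_cases hj : (j : ℕ) < k
      · exact congrFun hab ⟨j, hj⟩
      · rw [hq_zero a j (not_lt.1 hj), hq_zero b j (not_lt.1 hj)]
    rw [hXq, hXq, this]
  · ext j
    exact hXq i _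

lemma lipschitzWith_one_euclideanSpace_comp {ι κ : Type*} [Fintype ι] [Fintype κ] (e : κ → ι) :
    LipschitzWith 1 fun (x : EuclideanSpace ℝ ι) (j : κ) ↦ x (e j) :=
  LipschitzWith.of_dist_le_mul fun x y ↦ by
    rw [NNReal.coe_one, one_mul, dist_pi_le_iff dist_nonneg]
    intro j
    simpa [Real.dist_eq, dist_eq_norm] using PiLp.norm_apply_le (x - y) (e j)

lemma min_iInf_rpow_one_mem_Icc {ι : Type*} {f : ι → ℝ} (hf : ∀ i, 0 ≤ f i) (t : ℝ) :
    min (⨅ i, f i ^ t) 1 ∈ Icc (0 : ℝ) 1 :=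
  ⟨le_min (Real.iInf_nonneg fun i ↦ Real.rpow_nonneg (hf i) t) zero_le_one, min_le_right _ _⟩

theorem stmt_14_general {E κ : Type*} [SeminormedAddCommGroup E] [Fintype κ]
    {α p τ C₀ C₁ C₂ K₁ : ℝ} (hp : 1 < p) (hτκ : Fintype.card κ < τ) (hτα : τ ≤ α)
    (hC₀ : 0 ≤ C₀) (hC₁ : 0 < C₁) (hC₁₂ : C₁ ≤ C₂) (hK₁ : 0 < K₁) :
    ∃ C > (0 : ℝ), ∀ {ι : Type*} [Fintype ι] {π : E → κ → ℝ} {d : ℝ} {X P : ι → E} {Λ : ι → ℝ},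
      LipschitzWith 1 π → 1 ≤ d → LiesOverLattice π d X → (∀ i, ‖P i - X i‖ ≤ 1 / 2) →
      (∀ i, Λ i ∈ Icc C₁ C₂) →
      ∀ {K γ φ : E → ℝ} {ν : ℝ}, (∀ y, |K y| ≤ K₁) → (∀ y, γ y ∈ Icc 0 1) → ν ∈ Icc 0 1 →
      (∀ y, |φ y| ≤ ν * (γ y * weightSum X (α + τ) y)) →
      ∀ x, |K x * powerRemainder p (bubbleSum C₀ α P Λ x) (φ x)| ≤
        C * ν ^ min 2 p * (γ x * weightSum X (α * p + τ) x) := by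
  have hα : 0 ≤ α := (Nat.cast_nonneg _).trans (hτκ.le.trans hτα)
  have hC₂ : 0 < C₂ := hC₁.trans_le hC₁₂
  set A : ℝ := C₀ * (5 * C₂ + 2 / C₁) ^ α
  set M : ℝ := 2 ^ τ * ∑' z : κ → ℤ, (1 + ‖z‖) ^ (-τ)
  have hM : 0 < M := mul_pos (by positivity) <|
    (summable_one_add_norm_rpow_neg hτκ).tsum_pos (fun _ ↦ by positivity) 0 (by simp)
  refine ⟨K₁ * (p ^ 2 * (A + 1) ^ p * M ^ (p - 1)), by positivity, ?_⟩
  intro ι _ π d X P Λ hπ hd hX hP hΛ K γ φ ν hK hγ hν hφ x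
  have remainder_le := abs_powerRemainder_le_of_le_mul hp (by positivity)
    (bubbleSum_nonneg hC₀ (fun i ↦ hC₁.le.trans (hΛ i).1) P x) (weightSum_nonneg X _ x)
    (bubbleSum_le hC₀ hC₁ hα hτα hΛ hP x) (hγ x) hν (hφ x)
  have power_le : weightSum X (α + τ) x ^ p ≤ M ^ (p - 1) * weightSum X (α * p + τ) x :=
    (weightSum_add_rpow_le hp.le X α τ x).trans <| by
      exact mul_le_mul_of_nonneg_right (Real.rpow_le_rpow (weightSum_nonneg X τ x)
        (hX.weightSum_le hπ hd hτκ x) (by linarith)) (weightSum_nonneg X _ x)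
  have hγ₀ := (hγ x).1
  have hν₀ := hν.1
  calc |K x * powerRemainder p (bubbleSum C₀ α P Λ x) (φ x)|
      ≤ K₁ * (p ^ 2 * (A + 1) ^ p *
          (ν ^ min 2 p * (γ x * weightSum X (α + τ) x ^ p))) := by
        rw [abs_mul]
        exact mul_le_mul (hK x) remainder_le (abs_nonneg _) hK₁.le
    _ ≤ K₁ * (p ^ 2 * (A + 1) ^ p *
          (ν ^ min 2 p * (γ x * (M ^ (p - 1) * weightSum X (α * p + τ) x)))) := by gcongr
    _ = _ := by ring

theorem stmt_14 (n k : ℕ) (s β τ C₀ C₁ C₂ : ℝ) (hn0 : 0 < n) (hs0 : 0 < s) (hs1 : s < 1)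
    (hn : 2 * s + 2 < (n : ℝ)) (hk1 : 1 ≤ k) (hk2 : (k : ℝ) < ((n : ℝ) - 2 * s) / 2)
    (hβ1 : (n : ℝ) - 2 * s < β) (hβ2 : β < (n : ℝ))
    (hτ1 : (k : ℝ) < τ) (hτ2 : τ < ((n : ℝ) - 2 * s) / 2)
    (hC₀ : 0 < C₀) (hC₁ : 0 < C₁) (hC₁₂ : C₁ < C₂)
    (a : Fin n → ℝ) (K : EuclideanSpace ℝ (Fin n) → ℝ) (hK : KHyp n k β a K)
    (l : ℕ) (hl : 1 ≤ l) :
    ∃ C > (0 : ℝ), ∀ m : ℕ, 1 ≤ m →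
      ∀ lam : ℝ, lam = (l : ℝ) ^ (((n : ℝ) - 2 * s) / (β - (n : ℝ) + 2 * s)) →
      ∀ X : Fin ((m + 1) ^ k) → EuclideanSpace ℝ (Fin n), latticeEnum n k m (lam * l) X →
      ∀ P : Fin ((m + 1) ^ k) → EuclideanSpace ℝ (Fin n), (∀ i, ‖P i - X i‖ < 1 / 2) →
      ∀ Λ : Fin ((m + 1) ^ k) → ℝ, (∀ i, Λ i ∈ Set.Icc C₁ C₂) →
      ∀ γ W : EuclideanSpace ℝ (Fin n) → ℝ,
      (∀ y, γ y = min (⨅ i, ((1 + ‖y - X i‖) / lam) ^ (τ - s)) 1) →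
      (∀ y, W y = ∑ i, C₀ * (Λ i / (1 + Λ i ^ 2 * ‖y - P i‖ ^ 2)) ^ (((n : ℝ) - 2 * s) / 2)) →
      ∀ φ : EuclideanSpace ℝ (Fin n) → ℝ, ∀ nφ : ℝ,
      -- `nφ` is any upper bound for `‖φ‖_*` with `nφ ≤ 1` (so in particular `‖φ‖_* ≤ 1`)
      0 ≤ nφ → nφ ≤ 1 →
      (∀ y, |φ y| ≤ nφ * (γ y * ∑ i, (1 + ‖y - X i‖) ^ (-(((n : ℝ) - 2 * s) / 2 + τ)))) →
      -- pointwise form of `‖N(φ)‖_{**} ≤ C ‖φ‖_*^{min{2, (n+2s)/(n-2s)}}`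
      ∀ x : EuclideanSpace ℝ (Fin n),
        |K (lam⁻¹ • x) *
            (max (W x + φ x) 0 ^ (((n : ℝ) + 2 * s) / ((n : ℝ) - 2 * s)) -
              W x ^ (((n : ℝ) + 2 * s) / ((n : ℝ) - 2 * s)) -
              (((n : ℝ) + 2 * s) / ((n : ℝ) - 2 * s)) *
                W x ^ (4 * s / ((n : ℝ) - 2 * s)) * φ x)| ≤
          C * nφ ^ (min 2 (((n : ℝ) + 2 * s) / ((n : ℝ) - 2 * s))) *
            (γ x * ∑ i, (1 + ‖x - X i‖) ^ (-(((n : ℝ) + 2 * s) / 2 + τ))) := by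
  have hn2s : 0 < (n : ℝ) - 2 * s := by linarith
  have hkn : k ≤ n := by exact_mod_cast (by linarith : (k : ℝ) ≤ n)
  obtain ⟨⟨K₀, K₁, hK₀, hKb⟩, -⟩ := hK
  have hK_abs (y) : |K y| ≤ K₁ := by rw [abs_of_pos (hK₀.trans_le (hKb y).1)]; exact (hKb y).2
  set α := ((n : ℝ) - 2 * s) / 2 with hα
  set p := ((n : ℝ) + 2 * s) / ((n : ℝ) - 2 * s) with hp
  have hp_sub_one : 4 * s / ((n : ℝ) - 2 * s) = p - 1 := by rw [hp, div_sub_one hn2s.ne']; ring_nf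
  have hα_mul_p : ((n : ℝ) + 2 * s) / 2 = α * p := by rw [hα, hp]; field_simp
  obtain ⟨C, hC, hbound⟩ := stmt_14_general (E := EuclideanSpace ℝ (Fin n)) (κ := Fin k)
    (show 1 < p by rw [hp, one_lt_div hn2s]; linarith) (by simpa using hτ1) hτ2.le hC₀.le hC₁
    hC₁₂.le (hK₀.trans_le ((hKb 0).1.trans (hKb 0).2))
  refine ⟨C, hC, fun m _ lam hlam X hX P hP Λ hΛ γ W hγ hW φ ν hν₀ hν₁ hφ x ↦ ?_⟩
  have hl' : (1 : ℝ) ≤ l := by exact_mod_cast hl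
  have hlam_one : 1 ≤ lam := hlam ▸ Real.one_le_rpow hl' (div_nonneg hn2s.le (by linarith))
  have hγ_mem (y) : γ y ∈ Icc 0 1 := hγ y ▸ min_iInf_rpow_one_mem_Icc (fun i ↦ by positivity) _
  rw [hp_sub_one, hα_mul_p, hW]
  exact hbound (K := fun y ↦ K (lam⁻¹ • y)) (lipschitzWith_one_euclideanSpace_comp _)
    (one_le_mul_of_one_le_of_one_le hlam_one hl') (hX.liesOverLattice hkn) (fun i ↦ (hP i).le) hΛ
    (fun y ↦ hK_abs _) hγ_mem ⟨hν₀, hν₁⟩ hφ x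
end

section
/- For every ε > 0 there exist a constant C > 0 and an integer l_0 such that for all integers l ≥ l_0, all m, all i, and all admissible P^i, Λ_i: | ∫_{ℝ^n} K(x/λ) U_{P^i,Λ_i}(x)^{(n+2s)/(n−2s)} (∂U_{P^i,Λ_i}/∂Λ_i)(x) dx + ((n−2s)/(2n)) β C_0^{2n/(n−2s)} (Σ_{h=1}^n a_h) Λ_i^{−(β+1)} λ^{−β} ∫_{ℝ^n} |x_1|^β (1+|x|²)^{−n} dx | ≤ C |P^i − X^i|^{min{2, β−1}} λ^{−β} + ε λ^{−β}. -/
/-!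
The kernel `U ^ ((n + 2s) / (n - 2s)) * ∂U/∂Λ` is, up to a constant, the `Λ`-derivative of
`(Λ / (1 + Λ²|x - P|²)) ^ n`. Move `P` to the origin; by periodicity `K` is then evaluated at
`λ⁻¹(y + p)` with `p = P - X`. Near `0` it is `K(0) + Q + o(|x|^β)` with `Q = Σ aᵢ|xᵢ|^β`.

* By scaling, `∫ Q(y) (Λ / (1 + Λ²|y|²)) ^ n dy` is a constant times the pure power `Λ^(-β)`; its
  derivative is the main term. The same argument with `Q = 1`, of degree `0`, shows that the
  constant `K(0)` contributes nothing.
* `Q` is even and the kernel is radial, so replacing `Q(y + p)` by `Q(y)` costs only the integral of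
  a symmetric second difference of `Q`, which is `O(|p|²)` because `β > 2`.
* For `β < γ < n` the remainder is at most `η|x|^β + A|x|^γ` everywhere, with `η` as small as we
  like; after rescaling the second term is negligible, which leaves `ε λ^(-β)`.
-/

open Asymptotics Filter MeasureTheory Module Set
open scoped Topology

/-- The radial base of the bubbles: `U_{ξ,b}(x) = C₀ * bubbleBase b ‖x - ξ‖ ^ ((n - 2s) / 2)`. -/
noncomputable def bubbleBase (b r : ℝ) : ℝ := b / (1 + b ^ 2 * r ^ 2)

/-- The logarithmic derivative of `bubbleBase b r` in the concentration parameter `b`. -/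
noncomputable def bubbleBaseLogDeriv (b r : ℝ) : ℝ :=
  (1 - b ^ 2 * r ^ 2) / (b * (1 + b ^ 2 * r ^ 2))

/-- The derivative of `bubbleBase b r ^ q` in `b`. For `q = n` it is, up to a constant, the radial
profile of `U ^ ((n + 2s) / (n - 2s)) * ∂U/∂b`, the kernel against which `K` is integrated. -/
noncomputable def dilationKernel (q b r : ℝ) : ℝ :=
  q * (bubbleBase b r ^ q * bubbleBaseLogDeriv b r)

section DilationKernel

variable {q b r : ℝ}

lemma bubbleBase_pos (hb : 0 < b) (r : ℝ) : 0 < bubbleBase b r := by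
  unfold bubbleBase; positivity

lemma hasDerivAt_bubbleBase (hb : 0 < b) (r : ℝ) :
    HasDerivAt (bubbleBase · r) (bubbleBase b r * bubbleBaseLogDeriv b r) b := by
  have hden : HasDerivAt (fun b : ℝ => 1 + b ^ 2 * r ^ 2) (2 * b * r ^ 2) b := by
    simpa using ((hasDerivAt_pow 2 b).mul_const (r ^ 2)).const_add 1
  refine ((hasDerivAt_id b).div hden (by positivity)).congr_deriv ?_
  unfold bubbleBase bubbleBaseLogDeriv
  simp only [id]
  field_simp
  ring

lemma hasDerivAt_bubbleBase_rpow (q : ℝ) (hb : 0 < b) (r : ℝ) :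
    HasDerivAt (fun b => bubbleBase b r ^ q) (dilationKernel q b r) b := by
  have hv := bubbleBase_pos hb r
  refine ((hasDerivAt_bubbleBase hb r).rpow_const (Or.inl hv.ne')).congr_deriv ?_
  rw [dilationKernel, Real.rpow_sub_one hv.ne']
  field_simp

lemma bubble_rpow_mul_deriv {n s C₀ : ℝ} (hn : n ≠ 0) (hns : n - 2 * s ≠ 0) (hC₀ : 0 < C₀)
    (hb : 0 < b) (r : ℝ) :
    (C₀ * bubbleBase b r ^ ((n - 2 * s) / 2)) ^ ((n + 2 * s) / (n - 2 * s)) *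
        deriv (fun b => C₀ * bubbleBase b r ^ ((n - 2 * s) / 2)) b =
      (n - 2 * s) / (2 * n) * C₀ ^ (2 * n / (n - 2 * s)) * dilationKernel n b r := by
  have hv := bubbleBase_pos hb r
  have hexp : 2 * n / (n - 2 * s) = (n + 2 * s) / (n - 2 * s) + 1 := by field_simp; ring
  have hn_eq : n = (n - 2 * s) / 2 * ((n + 2 * s) / (n - 2 * s)) + (n - 2 * s) / 2 := by
    field_simp; ring
  have hvn : bubbleBase b r ^ n = bubbleBase b r ^ ((n - 2 * s) / 2 * ((n + 2 * s) / (n - 2 * s))) *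
      bubbleBase b r ^ ((n - 2 * s) / 2) := by
    rw [← Real.rpow_add hv, ← hn_eq]
  rw [((hasDerivAt_bubbleBase_rpow _ hb r).const_mul C₀).deriv, dilationKernel, dilationKernel, hvn,
    Real.mul_rpow hC₀.le (Real.rpow_nonneg hv.le _), ← Real.rpow_mul hv.le, hexp,
    Real.rpow_add_one hC₀.ne']
  field_simp

lemma bubbleBase_le (hb : 0 < b) (hr : 0 ≤ r) :
    bubbleBase b r ≤ 2 * (b + b⁻¹) * (1 + r) ^ (-2 : ℝ) := by
  rw [bubbleBase, Real.rpow_neg (by positivity), Real.rpow_two, ← div_eq_mul_inv,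
    div_le_div_iff₀ (by positivity) (by positivity)]
  have hsq : (1 + r) ^ 2 ≤ 2 * (1 + r ^ 2) := by nlinarith [sq_nonneg (1 - r)]
  calc b * (1 + r) ^ 2 ≤ b * (2 * (1 + r ^ 2)) := by gcongr
    _ ≤ 2 * (b * (1 + r ^ 2) + (b⁻¹ + b ^ 3 * r ^ 2)) := by
        have : 0 ≤ b⁻¹ + b ^ 3 * r ^ 2 := by positivity
        linarith
    _ = 2 * (b + b⁻¹) * (1 + b ^ 2 * r ^ 2) := by field_simp; ring

lemma bubbleBase_rpow_le (hq : 0 ≤ q) (hb : 0 < b) (hr : 0 ≤ r) :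
    bubbleBase b r ^ q ≤ (2 * (b + b⁻¹)) ^ q * (1 + r) ^ (-(2 * q)) := by
  refine (Real.rpow_le_rpow (bubbleBase_pos hb r).le (bubbleBase_le hb hr) hq).trans_eq ?_
  rw [Real.mul_rpow (by positivity) (by positivity), ← Real.rpow_mul (by positivity), neg_mul]

lemma abs_bubbleBaseLogDeriv_le (hb : 0 < b) (r : ℝ) : |bubbleBaseLogDeriv b r| ≤ b⁻¹ := by
  have hnum : |1 - b ^ 2 * r ^ 2| ≤ 1 + b ^ 2 * r ^ 2 := by
    rw [abs_le]
    constructor <;> nlinarith [mul_nonneg (sq_nonneg b) (sq_nonneg r)]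
  rw [bubbleBaseLogDeriv, abs_div, abs_of_pos (by positivity : 0 < b * (1 + b ^ 2 * r ^ 2)),
    div_le_iff₀ (by positivity), inv_mul_cancel_left₀ hb.ne']
  exact hnum

lemma abs_dilationKernel_le (hq : 0 ≤ q) {c₁ c₂ : ℝ} (hc₁ : 0 < c₁) (hb : b ∈ Icc c₁ c₂)
    (hr : 0 ≤ r) :
    |dilationKernel q b r| ≤ q * (2 * (c₂ + c₁⁻¹)) ^ q * c₁⁻¹ * (1 + r) ^ (-(2 * q)) := by
  have hb₀ : 0 < b := hc₁.trans_le hb.1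
  have hc₂ : 0 < c₂ := hb₀.trans_le hb.2
  have hv := bubbleBase_pos hb₀ r
  rw [dilationKernel, abs_mul, abs_of_nonneg hq, abs_mul, abs_of_pos (by positivity)]
  calc q * (bubbleBase b r ^ q * |bubbleBaseLogDeriv b r|)
      ≤ q * ((2 * (b + b⁻¹)) ^ q * (1 + r) ^ (-(2 * q)) * b⁻¹) := by
        gcongr
        exacts [bubbleBase_rpow_le hq hb₀ hr, abs_bubbleBaseLogDeriv_le hb₀ r]
    _ ≤ q * ((2 * (c₂ + c₁⁻¹)) ^ q * (1 + r) ^ (-(2 * q)) * c₁⁻¹) := by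
        gcongr
        exacts [hb.2, hb.1, hb.1]
    _ = q * (2 * (c₂ + c₁⁻¹)) ^ q * c₁⁻¹ * (1 + r) ^ (-(2 * q)) := by ring

lemma continuous_bubbleBase_rpow (q : ℝ) (hb : 0 < b) : Continuous fun r => bubbleBase b r ^ q :=
  (continuous_const.div (by fun_prop) fun r => by positivity).rpow_const
    fun r => Or.inl (bubbleBase_pos hb r).ne'

lemma continuous_dilationKernel (q : ℝ) (hb : 0 < b) : Continuous (dilationKernel q b) :=
  continuous_const.mul <| (continuous_bubbleBase_rpow q hb).mul <|
    Continuous.div (by fun_prop) (by fun_prop) fun r => by positivity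

end DilationKernel

section SecondDifference

lemma norm_second_difference_le {F : Type*} [NormedAddCommGroup F] [NormedSpace ℝ F] {f f' : ℝ → F}
    {t h : ℝ} {L : NNReal} (hf : ∀ x, HasDerivAt f (f' x) x)
    (hf' : LipschitzOnWith L f' (Metric.closedBall t |h|)) :
    ‖f (t + h) + f (t - h) - 2 • f t‖ ≤ 2 * L * h ^ 2 := by
  have hderiv (x : ℝ) :
      HasDerivAt (fun x => f (t + x) + f (t - x)) (f' (t + x) - f' (t - x)) x := by
    have h₁ := (hf (t + x)).scomp x ((hasDerivAt_id x).const_add t)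
    have h₂ := (hf (t - x)).scomp x ((hasDerivAt_id x).const_sub t)
    exact (h₁.add h₂).congr_deriv (by simp [sub_eq_add_neg])
  have hbound : ∀ x ∈ Metric.closedBall (0 : ℝ) |h|, ‖f' (t + x) - f' (t - x)‖ ≤ 2 * L * |h| := by
    intro x hx
    rw [mem_closedBall_zero_iff, Real.norm_eq_abs] at hx
    have := hf'.norm_sub_le (x := t + x) (y := t - x) (by simpa using hx) (by simpa using hx)
    calc ‖f' (t + x) - f' (t - x)‖ ≤ L * ‖t + x - (t - x)‖ := this
      _ = 2 * L * |x| := by rw [add_sub_sub_cancel, ← two_mul, norm_mul]; simp; ring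
      _ ≤ 2 * L * |h| := by gcongr
  have hmvt := (convex_closedBall (0 : ℝ) |h|).norm_image_sub_le_of_norm_hasDerivWithin_le
    (fun x _ => (hderiv x).hasDerivWithinAt) hbound (x := 0) (y := h) (by simp) (by simp)
  simpa [two_nsmul, mul_assoc, ← sq] using hmvt

lemma hasDerivAt_abs_rpow_mul_self {α : ℝ} (hα : 0 < α) (x : ℝ) :
    HasDerivAt (fun x : ℝ => |x| ^ α * x) ((α + 1) * |x| ^ α) x := by
  rcases eq_or_ne x 0 with rfl | hx
  · have hcont : Continuous fun t : ℝ => |t| ^ α :=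
      continuous_abs.rpow_const fun _ => Or.inr hα.le
    rw [hasDerivAt_iff_tendsto_slope_zero]
    refine ((hcont.tendsto 0).mono_left nhdsWithin_le_nhds).congr' ?_ |>.trans_eq ?_
    · filter_upwards [self_mem_nhdsWithin] with t (ht : t ≠ 0)
      simp; field_simp
    · simp [hα.ne']
  · have habs : |x| ≠ 0 := abs_ne_zero.2 hx
    refine (((hasDerivAt_abs hx).rpow_const (p := α) (Or.inl habs)).mul
      (hasDerivAt_id x)).congr_deriv ?_
    have hsign : (SignType.sign x : ℝ) * x = |x| := sign_mul_self x
    have hpow : |x| ^ (α - 1) * |x| = |x| ^ α := by rw [Real.rpow_sub_one habs]; field_simp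
    simp only [id]
    linear_combination (α * |x| ^ (α - 1)) * hsign + α * hpow

lemma abs_rpow_second_difference_le {β t h : ℝ} (hβ : 2 < β) (hh : |h| ≤ 1) :
    |(|t + h| ^ β + |t - h| ^ β - 2 * |t| ^ β)| ≤ 2 * (β * (β - 1)) * (1 + |t|) ^ β * h ^ 2 := by
  have hβ' : 0 ≤ β * (β - 1) := by nlinarith
  have hderiv₂ (x : ℝ) :
      HasDerivAt (fun x => β * |x| ^ (β - 2) * x) (β * (β - 1) * |x| ^ (β - 2)) x := by
    simpa only [← mul_assoc, show β - 2 + 1 = β - 1 by ring] using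
      (hasDerivAt_abs_rpow_mul_self (sub_pos.2 hβ) x).const_mul β
  have hbound : ∀ x ∈ Metric.closedBall t |h|,
      ‖β * (β - 1) * |x| ^ (β - 2)‖ ≤ β * (β - 1) * (1 + |t|) ^ β := by
    intro x hx
    rw [Metric.mem_closedBall, Real.dist_eq] at hx
    have hxt : |x| ≤ 1 + |t| := by linarith [abs_sub_abs_le_abs_sub x t]
    rw [Real.norm_of_nonneg (by positivity)]
    gcongr
    calc |x| ^ (β - 2) ≤ (1 + |t|) ^ (β - 2) := by gcongr
      _ ≤ (1 + |t|) ^ β := by gcongr <;> linarith [abs_nonneg t]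
  obtain ⟨L, hL⟩ : ∃ L : NNReal, (L : ℝ) = β * (β - 1) * (1 + |t|) ^ β :=
    ⟨⟨_, by positivity⟩, rfl⟩
  have hlip := (convex_closedBall t |h|).lipschitzOnWith_of_nnnorm_hasDerivWithin_le (C := L)
    (fun x _ => (hderiv₂ x).hasDerivWithinAt) fun x hx => (hbound x hx).trans_eq hL.symm
  have := norm_second_difference_le (fun x => hasDerivAt_abs_rpow x (by linarith)) hlip
  calc |(|t + h| ^ β + |t - h| ^ β - 2 * |t| ^ β)|
      ≤ 2 * (β * (β - 1) * (1 + |t|) ^ β) * h ^ 2 := by simpa [hL] using this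
    _ = 2 * (β * (β - 1)) * (1 + |t|) ^ β * h ^ 2 := by ring

end SecondDifference

section WeightedIntegrals

variable {E : Type*} [NormedAddCommGroup E] {f g : E → ℝ} {A B γ ρ : ℝ}

lemma norm_mul_le_of_growth_of_decay (hf : ∀ y, |f y| ≤ A * (1 + ‖y‖) ^ γ)
    (hg : ∀ y, |g y| ≤ B * (1 + ‖y‖) ^ (-ρ)) (y : E) :
    ‖f y * g y‖ ≤ A * B * (1 + ‖y‖) ^ (-(ρ - γ)) := by
  rw [norm_mul, Real.norm_eq_abs, Real.norm_eq_abs]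
  calc |f y| * |g y| ≤ (A * (1 + ‖y‖) ^ γ) * (B * (1 + ‖y‖) ^ (-ρ)) :=
        mul_le_mul (hf y) (hg y) (abs_nonneg _) ((abs_nonneg _).trans (hf y))
    _ = A * B * (1 + ‖y‖) ^ (-(ρ - γ)) := by
        rw [neg_sub, sub_eq_add_neg γ ρ, Real.rpow_add (by positivity)]
        ring

lemma one_add_norm_add_rpow_le (hγ : 0 ≤ γ) {p : E} (hp : ‖p‖ ≤ 1) (y : E) :
    (1 + ‖y + p‖) ^ γ ≤ 2 ^ γ * (1 + ‖y‖) ^ γ := by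
  rw [← Real.mul_rpow (by norm_num) (by positivity)]
  gcongr
  linarith [norm_add_le y p, norm_nonneg y]

variable [NormedSpace ℝ E] [FiniteDimensional ℝ E] [MeasurableSpace E] [BorelSpace E]
  {μ : Measure E} [μ.IsAddHaarMeasure]

lemma integrable_mul_of_growth_of_decay (hρ : finrank ℝ E < ρ - γ) (hfc : Continuous f)
    (hgc : Continuous g) (hf : ∀ y, |f y| ≤ A * (1 + ‖y‖) ^ γ)
    (hg : ∀ y, |g y| ≤ B * (1 + ‖y‖) ^ (-ρ)) :
    Integrable (fun y => f y * g y) μ :=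
  ((integrable_one_add_norm hρ).const_mul (A * B)).mono' (hfc.mul hgc).aestronglyMeasurable
    (.of_forall (norm_mul_le_of_growth_of_decay hf hg))

lemma abs_integral_mul_le_of_growth_of_decay (hρ : finrank ℝ E < ρ - γ)
    (hf : ∀ y, |f y| ≤ A * (1 + ‖y‖) ^ γ) (hg : ∀ y, |g y| ≤ B * (1 + ‖y‖) ^ (-ρ)) :
    |∫ y, f y * g y ∂μ| ≤ A * B * ∫ y, (1 + ‖y‖) ^ (-(ρ - γ)) ∂μ := by
  rw [← integral_const_mul]
  exact norm_integral_le_of_norm_le ((integrable_one_add_norm hρ).const_mul (A * B))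
    (.of_forall (norm_mul_le_of_growth_of_decay hf hg))

end WeightedIntegrals

section DilationIntegrals

variable {E : Type*} [NormedAddCommGroup E] [NormedSpace ℝ E] [FiniteDimensional ℝ E]
  [MeasurableSpace E] [BorelSpace E] {μ : Measure E} [μ.IsAddHaarMeasure]
  {g : E → ℝ} {b B γ τ : ℝ}

lemma integrable_mul_dilationKernel (hγ : γ < finrank ℝ E) (hb : 0 < b) (hgc : Continuous g)
    (hg : ∀ y, |g y| ≤ B * (1 + ‖y‖) ^ γ) :
    Integrable (fun y => g y * dilationKernel (finrank ℝ E) b ‖y‖) μ :=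
  integrable_mul_of_growth_of_decay (by linarith) hgc
    ((continuous_dilationKernel _ hb).comp continuous_norm) hg fun y =>
    abs_dilationKernel_le (by positivity) hb (left_mem_Icc.2 le_rfl) (norm_nonneg y)

variable (μ) in
lemma exists_abs_integral_mul_dilationKernel_le
    (hγ : γ < finrank ℝ E) {c₁ c₂ : ℝ} (hc₁ : 0 < c₁) (hc : c₁ ≤ c₂) :
    ∃ M > 0, ∀ b ∈ Icc c₁ c₂, ∀ (g : E → ℝ) (B : ℝ), (∀ y, |g y| ≤ B * (1 + ‖y‖) ^ γ) →
      |∫ y, g y * dilationKernel (finrank ℝ E) b ‖y‖ ∂μ| ≤ M * B := by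
  set q : ℝ := (finrank ℝ E : ℝ)
  set D := q * (2 * (c₂ + c₁⁻¹)) ^ q * c₁⁻¹
  set W := ∫ y, (1 + ‖y‖) ^ (-(2 * q - γ)) ∂μ
  have hc₂ : 0 < c₂ := hc₁.trans_le hc
  have : 0 ≤ D := by positivity
  have : 0 ≤ W := integral_nonneg fun y => by positivity
  refine ⟨D * W + 1, by positivity, fun b hb g B hg => ?_⟩
  have hB : 0 ≤ B := by simpa using (abs_nonneg _).trans (hg 0)
  calc |∫ y, g y * dilationKernel q b ‖y‖ ∂μ| ≤ B * D * W :=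
        abs_integral_mul_le_of_growth_of_decay (by linarith) hg fun y =>
          abs_dilationKernel_le (by positivity) hc₁ hb (norm_nonneg y)
    _ ≤ (D * W + 1) * B := by linarith

lemma integral_mul_bubbleBase_rpow (hhom : ∀ c > 0, ∀ y, g (c • y) = c ^ τ * g y) (hb : 0 < b) :
    ∫ y, g y * bubbleBase b ‖y‖ ^ (finrank ℝ E : ℝ) ∂μ =
      b ^ (-τ) * ∫ y, g y * (1 + ‖y‖ ^ 2) ^ (-(finrank ℝ E : ℝ)) ∂μ := by
  have hpoint (y : E) : g y * bubbleBase b ‖y‖ ^ (finrank ℝ E : ℝ) =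
      b ^ (-τ) * b ^ finrank ℝ E *
        (g (b • y) * (1 + ‖b • y‖ ^ 2) ^ (-(finrank ℝ E : ℝ))) := by
    have hτ : b ^ τ ≠ 0 := (Real.rpow_pos_of_pos hb τ).ne'
    rw [hhom b hb, norm_smul, Real.norm_of_nonneg hb.le, mul_pow, bubbleBase,
      Real.rpow_neg hb.le, Real.rpow_neg (by positivity), Real.rpow_natCast, Real.rpow_natCast,
      div_pow]
    field_simp
  simp_rw [hpoint]
  rw [integral_const_mul, Measure.integral_comp_smul μ
    (fun y => g y * (1 + ‖y‖ ^ 2) ^ (-(finrank ℝ E : ℝ))) b, abs_of_pos (by positivity),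
    smul_eq_mul]
  field_simp

lemma integral_mul_dilationKernel (hγ : γ < finrank ℝ E) (hb : 0 < b) (hgc : Continuous g)
    (hg : ∀ y, |g y| ≤ B * (1 + ‖y‖) ^ γ) (hhom : ∀ c > 0, ∀ y, g (c • y) = c ^ τ * g y) :
    ∫ y, g y * dilationKernel (finrank ℝ E) b ‖y‖ ∂μ =
      -τ * b ^ (-(τ + 1)) * ∫ y, g y * (1 + ‖y‖ ^ 2) ^ (-(finrank ℝ E : ℝ)) ∂μ := by
  set q : ℝ := (finrank ℝ E : ℝ)
  have hq : 0 ≤ q := by positivity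
  have hcont {c : ℝ} (hc : 0 < c) : Continuous fun y : E => bubbleBase c ‖y‖ ^ q :=
    (continuous_bubbleBase_rpow q hc).comp continuous_norm
  have hint : Integrable (fun y => g y * bubbleBase b ‖y‖ ^ q) μ :=
    integrable_mul_of_growth_of_decay (ρ := 2 * q) (by linarith) hgc (hcont hb) hg fun y => by
      rw [abs_of_pos (Real.rpow_pos_of_pos (bubbleBase_pos hb _) _)]
      exact bubbleBase_rpow_le hq hb (norm_nonneg y)
  have hleft := (hasDerivAt_integral_of_dominated_loc_of_deriv_le (μ := μ)
    (F := fun c y => g y * bubbleBase c ‖y‖ ^ q) (F' := fun c y => g y * dilationKernel q c ‖y‖)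
    (Icc_mem_nhds (half_lt_self hb) (lt_two_mul_self hb))
    (by filter_upwards [lt_mem_nhds hb] with c hc using (hgc.mul (hcont hc)).aestronglyMeasurable)
    hint (integrable_mul_dilationKernel hγ hb hgc hg).aestronglyMeasurable
    (.of_forall fun y c hc => norm_mul_le_of_growth_of_decay hg
      (fun y => abs_dilationKernel_le hq (half_pos hb) hc (norm_nonneg y)) y)
    ((integrable_one_add_norm (by linarith)).const_mul _)
    (.of_forall fun y c hc =>
      (hasDerivAt_bubbleBase_rpow q ((half_pos hb).trans_le hc.1) ‖y‖).const_mul (g y))).2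
  have hright : HasDerivAt (fun c : ℝ => c ^ (-τ) * ∫ y, g y * (1 + ‖y‖ ^ 2) ^ (-q) ∂μ)
      (-τ * b ^ (-τ - 1) * ∫ y, g y * (1 + ‖y‖ ^ 2) ^ (-q) ∂μ) b :=
    (Real.hasDerivAt_rpow_const (Or.inl hb.ne')).mul_const _
  rw [neg_add']
  refine hleft.unique (hright.congr_of_eventuallyEq ?_)
  filter_upwards [lt_mem_nhds hb] with c hc using integral_mul_bubbleBase_rpow hhom hc

end DilationIntegrals

section LittleORemainder

variable {E F : Type*} [NormedAddCommGroup E] [NormedAddCommGroup F] {f : E → F} {B β γ η : ℝ}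

lemma exists_norm_le_of_isLittleO (hγ : 0 ≤ γ) (hf : f =o[𝓝 0] fun x => ‖x‖ ^ β)
    (hB : ∀ x, ‖f x‖ ≤ B * (1 + ‖x‖) ^ γ) (hη : 0 < η) :
    ∃ A, ∀ x, ‖f x‖ ≤ η * ‖x‖ ^ β + A * ‖x‖ ^ γ := by
  obtain ⟨δ, hδ, hball⟩ := Metric.eventually_nhds_iff.1 (hf.def hη)
  have hB₀ : 0 ≤ B := by simpa using (norm_nonneg _).trans (hB 0)
  refine ⟨B * (δ⁻¹ + 1) ^ γ, fun x => ?_⟩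
  rcases lt_or_ge ‖x‖ δ with hx | hx
  · have hnear := hball (y := x) (by simpa using hx)
    rw [Real.norm_of_nonneg (by positivity)] at hnear
    exact hnear.trans (le_add_of_nonneg_right (by positivity))
  · have hone : 1 ≤ δ⁻¹ * ‖x‖ := (le_inv_mul_iff₀ hδ).2 (by simpa using hx)
    calc ‖f x‖ ≤ B * (1 + ‖x‖) ^ γ := hB x
      _ ≤ B * ((δ⁻¹ + 1) * ‖x‖) ^ γ := by gcongr; linarith
      _ = B * (δ⁻¹ + 1) ^ γ * ‖x‖ ^ γ := by
          rw [Real.mul_rpow (by positivity) (norm_nonneg x), mul_assoc]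
      _ ≤ η * ‖x‖ ^ β + B * (δ⁻¹ + 1) ^ γ * ‖x‖ ^ γ := le_add_of_nonneg_left (by positivity)

lemma eventually_norm_comp_inv_smul_le [NormedSpace ℝ E] (hβ : 0 ≤ β) (hβγ : β < γ)
    (hf : f =o[𝓝 0] fun x => ‖x‖ ^ β) (hB : ∀ x, ‖f x‖ ≤ B * (1 + ‖x‖) ^ γ) (hη : 0 < η) :
    ∀ᶠ lam : ℝ in atTop, ∀ z, ‖f (lam⁻¹ • z)‖ ≤ η * lam ^ (-β) * (1 + ‖z‖) ^ γ := by
  obtain ⟨A, hA⟩ := exists_norm_le_of_isLittleO (hβ.trans hβγ.le) hf hB (half_pos hη)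
  have hlim : Tendsto (fun lam : ℝ => A * lam ^ (-(γ - β))) atTop (𝓝 0) := by
    simpa using (tendsto_rpow_neg_atTop (sub_pos.2 hβγ)).const_mul A
  filter_upwards [eventually_gt_atTop 0, hlim.eventually_le_const (half_pos hη)]
    with lam hlam hsmall z
  have hnorm : ‖lam⁻¹ • z‖ = lam⁻¹ * ‖z‖ := by rw [norm_smul, Real.norm_of_nonneg (by positivity)]
  have hsplit : lam ^ (-γ) = lam ^ (-(γ - β)) * lam ^ (-β) := by
    rw [← Real.rpow_add hlam]; ring_nf
  have hpow : ‖z‖ ^ β ≤ (1 + ‖z‖) ^ γ :=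
    (Real.rpow_le_rpow (norm_nonneg z) (by linarith) hβ).trans
      (Real.rpow_le_rpow_of_exponent_le (by linarith [norm_nonneg z]) hβγ.le)
  calc ‖f (lam⁻¹ • z)‖ ≤ η / 2 * (lam⁻¹ * ‖z‖) ^ β + A * (lam⁻¹ * ‖z‖) ^ γ := hnorm ▸ hA _
    _ = η / 2 * lam ^ (-β) * ‖z‖ ^ β + A * lam ^ (-(γ - β)) * lam ^ (-β) * ‖z‖ ^ γ := by
        simp only [Real.mul_rpow (inv_nonneg.2 hlam.le) (norm_nonneg z), Real.inv_rpow hlam.le,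
          ← Real.rpow_neg hlam.le, hsplit]
        ring
    _ ≤ η / 2 * lam ^ (-β) * (1 + ‖z‖) ^ γ + η / 2 * lam ^ (-β) * (1 + ‖z‖) ^ γ := by
        gcongr
        · exact hβ.trans hβγ.le
        · linarith
    _ = η * lam ^ (-β) * (1 + ‖z‖) ^ γ := by ring

end LittleORemainder

/-- The properties of the leading term `Σ aᵢ|xᵢ|^β` of `K` at its critical point on which the
asymptotics rest. The second differences are controlled only for increments in the unit ball, the
range of the displacements between a bubble and its lattice point. -/
structure IsHomogeneousModel {E : Type*} [NormedAddCommGroup E] [NormedSpace ℝ E] (β : ℝ)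
    (Q : E → ℝ) : Prop where
  continuous : Continuous Q
  even : Function.Even Q
  map_smul : ∀ c > 0, ∀ y, Q (c • y) = c ^ β * Q y
  exists_second_difference_le : ∃ B, ∀ y p, ‖p‖ ≤ 1 →
    |Q (y + p) + Q (y - p) - 2 * Q y| ≤ B * (1 + ‖y‖) ^ β * ‖p‖ ^ 2

section Asymptotics

variable {E : Type*} [NormedAddCommGroup E] [NormedSpace ℝ E] [FiniteDimensional ℝ E]
  {K Q : E → ℝ} {β c₁ c₂ : ℝ}

lemma IsHomogeneousModel.exists_abs_le (hQ : IsHomogeneousModel β Q) :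
    ∃ B, ∀ y, |Q y| ≤ B * (1 + ‖y‖) ^ β := by
  obtain ⟨B, hB⟩ := (isCompact_closedBall (0 : E) 1).exists_bound_of_continuousOn
    hQ.continuous.continuousOn
  refine ⟨B, fun y => ?_⟩
  have hpos : 0 < 1 + ‖y‖ := by positivity
  have hmem : (1 + ‖y‖)⁻¹ • y ∈ Metric.closedBall (0 : E) 1 := by
    rw [mem_closedBall_zero_iff, norm_smul, Real.norm_of_nonneg (by positivity),
      inv_mul_le_one₀ hpos]
    linarith
  calc |Q y| = (1 + ‖y‖) ^ β * |Q ((1 + ‖y‖)⁻¹ • y)| := by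
        rw [← abs_of_pos (Real.rpow_pos_of_pos hpos β), ← abs_mul, ← hQ.map_smul _ hpos,
          smul_inv_smul₀ hpos.ne']
    _ ≤ (1 + ‖y‖) ^ β * B := by gcongr; exact hB _ hmem
    _ = B * (1 + ‖y‖) ^ β := mul_comm _ _

variable [MeasurableSpace E] [BorelSpace E] (μ : Measure E) [μ.IsAddHaarMeasure]

lemma integral_dilationKernel_eq_zero (hd : 0 < finrank ℝ E) {b : ℝ} (hb : 0 < b) :
    ∫ y : E, dilationKernel (finrank ℝ E) b ‖y‖ ∂μ = 0 := by
  simpa using integral_mul_dilationKernel (μ := μ) (g := fun _ : E => 1) (B := 1) (γ := 0) (τ := 0)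
    (by exact_mod_cast hd) hb continuous_const (by simp) (by simp)

lemma IsHomogeneousModel.integrable_translate_mul_dilationKernel (hQ : IsHomogeneousModel β Q)
    (hβ : 0 ≤ β) (hβd : β < finrank ℝ E) {b : ℝ} (hb : 0 < b) {p : E} (hp : ‖p‖ ≤ 1) :
    Integrable (fun y => Q (y + p) * dilationKernel (finrank ℝ E) b ‖y‖) μ := by
  obtain ⟨B, hB⟩ := hQ.exists_abs_le
  have hB₀ : 0 ≤ B := by simpa using (abs_nonneg _).trans (hB 0)
  refine integrable_mul_dilationKernel (B := B * 2 ^ β) hβd hb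
    (hQ.continuous.comp (by fun_prop)) fun y => (hB _).trans ?_
  rw [mul_assoc]
  gcongr
  exact one_add_norm_add_rpow_le hβ hp y

lemma IsHomogeneousModel.exists_abs_integral_translate_sub_le (hQ : IsHomogeneousModel β Q)
    (hβ : 0 ≤ β) (hβd : β < finrank ℝ E) (hc₁ : 0 < c₁) (hc : c₁ ≤ c₂) :
    ∃ C > 0, ∀ b ∈ Icc c₁ c₂, ∀ p : E, ‖p‖ ≤ 1 →
      |∫ y, Q (y + p) * dilationKernel (finrank ℝ E) b ‖y‖ ∂μ -
        ∫ y, Q y * dilationKernel (finrank ℝ E) b ‖y‖ ∂μ| ≤ C * ‖p‖ ^ 2 := by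
  obtain ⟨B, hB⟩ := hQ.exists_second_difference_le
  obtain ⟨M, hM, hkernel⟩ := exists_abs_integral_mul_dilationKernel_le μ hβd hc₁ hc
  refine ⟨M * |B| + 1, by positivity, fun b hb p hp => ?_⟩
  have hint {p : E} (hp : ‖p‖ ≤ 1) := hQ.integrable_translate_mul_dilationKernel μ hβ hβd
    (hc₁.trans_le hb.1) hp
  set G : E → ℝ := fun y => dilationKernel (finrank ℝ E) b ‖y‖
  have hreflect : ∫ y, Q (y + -p) * G y ∂μ = ∫ y, Q (y + p) * G y ∂μ := by
    rw [← integral_neg_eq_self]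
    refine integral_congr_ae (.of_forall fun y => ?_)
    simp only [G, norm_neg, ← neg_add, hQ.even (y + p)]
  have hsymm : 2 * (∫ y, Q (y + p) * G y ∂μ - ∫ y, Q y * G y ∂μ) =
      ∫ y, (Q (y + p) + Q (y - p) - 2 * Q y) * G y ∂μ := by
    have hint₀ : Integrable (fun y => Q y * G y) μ := by simpa using hint (p := 0) (by simp)
    simp only [sub_mul, add_mul, mul_assoc, sub_eq_add_neg _ p]
    have hint₂ : Integrable (fun y => Q (y + -p) * G y) μ := hint (by simpa using hp)
    rw [integral_sub (by exact (hint hp).add hint₂) (hint₀.const_mul 2),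
      integral_add (hint hp) hint₂, integral_const_mul, hreflect]
    ring
  have hsecond := hkernel b hb (fun y => Q (y + p) + Q (y - p) - 2 * Q y) (|B| * ‖p‖ ^ 2) fun y =>
    (hB y p hp).trans <| by
      rw [mul_right_comm]
      gcongr
      exact le_abs_self B
  rw [← hsymm, abs_mul, abs_two] at hsecond
  nlinarith [abs_nonneg (∫ y, Q (y + p) * G y ∂μ - ∫ y, Q y * G y ∂μ), sq_nonneg ‖p‖]

lemma eventually_abs_integral_comp_inv_smul_mul_dilationKernel_le {f : E → ℝ} {B : ℝ}
    (hβ : 0 ≤ β) (hβd : β < finrank ℝ E) (hc₁ : 0 < c₁) (hc : c₁ ≤ c₂)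
    (hf : f =o[𝓝 0] fun x => ‖x‖ ^ β) (hB : ∀ x, |f x| ≤ B * (1 + ‖x‖) ^ β) {ε : ℝ} (hε : 0 < ε) :
    ∀ᶠ lam : ℝ in atTop, ∀ b ∈ Icc c₁ c₂, ∀ p : E, ‖p‖ ≤ 1 →
      |∫ y, f (lam⁻¹ • (y + p)) * dilationKernel (finrank ℝ E) b ‖y‖ ∂μ| ≤ ε * lam ^ (-β) := by
  obtain ⟨γ, hβγ, hγd⟩ := exists_between hβd
  obtain ⟨M, hM, hkernel⟩ := exists_abs_integral_mul_dilationKernel_le μ hγd hc₁ hc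
  have hBγ (x : E) : ‖f x‖ ≤ B * (1 + ‖x‖) ^ γ := by
    have hB₀ : 0 ≤ B := by simpa using (abs_nonneg _).trans (hB 0)
    refine (hB x).trans ?_
    gcongr
    linarith [norm_nonneg x]
  filter_upwards [eventually_gt_atTop 0,
    eventually_norm_comp_inv_smul_le hβ hβγ hf hBγ (η := ε / (M * 2 ^ γ)) (by positivity)]
    with lam hlam hsmall b hb p hp
  calc |∫ y, f (lam⁻¹ • (y + p)) * dilationKernel (finrank ℝ E) b ‖y‖ ∂μ|
      ≤ M * (ε / (M * 2 ^ γ) * lam ^ (-β) * 2 ^ γ) := by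
        refine hkernel b hb (fun y => f (lam⁻¹ • (y + p))) _ fun y => (hsmall (y + p)).trans ?_
        rw [mul_assoc _ (2 ^ γ)]
        gcongr
        exact one_add_norm_add_rpow_le (hβ.trans hβγ.le) hp y
    _ = ε * lam ^ (-β) := by field_simp

lemma IsHomogeneousModel.integral_comp_inv_smul_mul_dilationKernel_eq
    (hQ : IsHomogeneousModel β Q) (hβ : 0 ≤ β) (hβd : β < finrank ℝ E) (hKc : Continuous K)
    (hKb : ∃ B, ∀ x, |K x| ≤ B) {lam b : ℝ} (hlam : 0 < lam) (hb : 0 < b) {p : E} (hp : ‖p‖ ≤ 1) :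
    ∫ y, K (lam⁻¹ • (y + p)) * dilationKernel (finrank ℝ E) b ‖y‖ ∂μ =
      lam ^ (-β) * ∫ y, Q (y + p) * dilationKernel (finrank ℝ E) b ‖y‖ ∂μ +
        ∫ y, (K (lam⁻¹ • (y + p)) - K 0 - Q (lam⁻¹ • (y + p))) *
          dilationKernel (finrank ℝ E) b ‖y‖ ∂μ := by
  obtain ⟨B, hB⟩ := hKb
  have hd : (0 : ℝ) < finrank ℝ E := hβ.trans_lt hβd
  have hKint : Integrable (fun y => K (lam⁻¹ • (y + p)) * dilationKernel (finrank ℝ E) b ‖y‖) μ :=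
    integrable_mul_dilationKernel (B := B) (γ := 0) hd hb (hKc.comp (by fun_prop)) fun y => by
      simpa using hB _
  have hconst : Integrable (fun y : E => K 0 * dilationKernel (finrank ℝ E) b ‖y‖) μ :=
    integrable_mul_dilationKernel (B := B) (γ := 0) hd hb continuous_const fun y => by
      simpa using hB 0
  have hQint := hQ.integrable_translate_mul_dilationKernel μ hβ hβd hb hp
  simp only [hQ.map_smul _ (inv_pos.2 hlam), Real.inv_rpow hlam.le, ← Real.rpow_neg hlam.le,
    sub_mul, mul_assoc]
  rw [integral_sub (by exact hKint.sub hconst) (hQint.const_mul _), integral_sub hKint hconst,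
    integral_const_mul, integral_const_mul,
    integral_dilationKernel_eq_zero μ (by exact_mod_cast hd) hb]
  ring

theorem exists_forall_eventually_abs_integral_mul_dilationKernel_add_le
    (hQ : IsHomogeneousModel β Q) (hβ : 0 ≤ β) (hβd : β < finrank ℝ E) (hc₁ : 0 < c₁)
    (hc : c₁ ≤ c₂) (hKc : Continuous K) (hKb : ∃ B, ∀ x, |K x| ≤ B)
    (hKQ : (fun x => K x - K 0 - Q x) =o[𝓝 0] fun x => ‖x‖ ^ β) :
    ∃ C > 0, ∀ ε > 0, ∀ᶠ lam : ℝ in atTop, ∀ b ∈ Icc c₁ c₂, ∀ p : E, ‖p‖ ≤ 1 →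
      |∫ y, K (lam⁻¹ • (y + p)) * dilationKernel (finrank ℝ E) b ‖y‖ ∂μ +
        β * b ^ (-(β + 1)) * lam ^ (-β) *
          ∫ y, Q y * (1 + ‖y‖ ^ 2) ^ (-(finrank ℝ E : ℝ)) ∂μ| ≤ (C * ‖p‖ ^ 2 + ε) * lam ^ (-β) := by
  obtain ⟨C, hC, hmodel⟩ := hQ.exists_abs_integral_translate_sub_le μ hβ hβd hc₁ hc
  obtain ⟨A, hA⟩ := hQ.exists_abs_le
  obtain ⟨B, hB⟩ := hKb
  have hrem (x : E) : |K x - K 0 - Q x| ≤ (B + B + A) * (1 + ‖x‖) ^ β := by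
    have hB₀ : 0 ≤ B := (abs_nonneg _).trans (hB 0)
    have hone : 1 ≤ (1 + ‖x‖) ^ β := Real.one_le_rpow (by linarith [norm_nonneg x]) hβ
    have := abs_sub (K x - K 0) (Q x)
    have := abs_sub (K x) (K 0)
    nlinarith [hB x, hB 0, hA x]
  refine ⟨C, hC, fun ε hε => ?_⟩
  filter_upwards [eventually_gt_atTop 0, eventually_abs_integral_comp_inv_smul_mul_dilationKernel_le
    μ hβ hβd hc₁ hc hKQ hrem hε] with lam hlam hsmall b hb p hp
  have hb₀ : 0 < b := hc₁.trans_le hb.1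
  set G : E → ℝ := fun y => dilationKernel (finrank ℝ E) b ‖y‖
  set f : E → ℝ := fun x => K x - K 0 - Q x
  have hQG : ∫ y, Q y * G y ∂μ = -β * b ^ (-(β + 1)) *
      ∫ y, Q y * (1 + ‖y‖ ^ 2) ^ (-(finrank ℝ E : ℝ)) ∂μ :=
    integral_mul_dilationKernel hβd hb₀ hQ.continuous hA hQ.map_smul
  calc _ = |lam ^ (-β) * (∫ y, Q (y + p) * G y ∂μ - ∫ y, Q y * G y ∂μ) +
          ∫ y, f (lam⁻¹ • (y + p)) * G y ∂μ| := by
        rw [hQ.integral_comp_inv_smul_mul_dilationKernel_eq μ hβ hβd hKc ⟨B, hB⟩ hlam hb₀ hp, hQG]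
        congr 1
        ring
    _ ≤ lam ^ (-β) * (C * ‖p‖ ^ 2) + ε * lam ^ (-β) := by
        refine (abs_add_le _ _).trans (add_le_add ?_ (hsmall b hb p hp))
        rw [abs_mul, abs_of_pos (Real.rpow_pos_of_pos hlam _)]
        gcongr
        exact hmodel b hb p hp
    _ = (C * ‖p‖ ^ 2 + ε) * lam ^ (-β) := by ring

end Asymptotics

lemma integral_mul_bubble_rpow_mul_deriv_eq {E : Type*} [NormedAddCommGroup E] [NormedSpace ℝ E]
    [MeasurableSpace E] [MeasurableAdd E] {μ : Measure E} [μ.IsAddRightInvariant] {K : E → ℝ}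
    {n s C₀ lam b : ℝ} (hn : n ≠ 0) (hns : n - 2 * s ≠ 0) (hC₀ : 0 < C₀) (hb : 0 < b) {ξ : E}
    (hξ : Function.Periodic K (lam⁻¹ • ξ)) (P : E) :
    ∫ x, K (lam⁻¹ • x) *
        (C₀ * bubbleBase b ‖x - P‖ ^ ((n - 2 * s) / 2)) ^ ((n + 2 * s) / (n - 2 * s)) *
        deriv (fun b => C₀ * bubbleBase b ‖x - P‖ ^ ((n - 2 * s) / 2)) b ∂μ =
      (n - 2 * s) / (2 * n) * C₀ ^ (2 * n / (n - 2 * s)) *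
        ∫ y, K (lam⁻¹ • (y + (P - ξ))) * dilationKernel n b ‖y‖ ∂μ := by
  rw [← integral_const_mul, ← integral_sub_right_eq_self (fun y => _ * (K _ * _)) P]
  refine integral_congr_ae (.of_forall fun x => ?_)
  have hshift : K (lam⁻¹ • (x - P + (P - ξ))) = K (lam⁻¹ • x) := by
    rw [sub_add_sub_cancel, smul_sub, hξ.sub_eq]
  simp only [hshift, mul_assoc, bubble_rpow_mul_deriv hn hns hC₀ hb]
  ring

section CoordinatePowers

variable {ι : Type*} [Fintype ι] {β : ℝ}

lemma isHomogeneousModel_sum_mul_abs_rpow (hβ : 2 < β) (a : ι → ℝ) :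
    IsHomogeneousModel β fun x : EuclideanSpace ℝ ι => ∑ i, a i * |x i| ^ β where
  continuous := continuous_finsetSum _ fun i _ =>
    continuous_const.mul ((by fun_prop : Continuous fun x : EuclideanSpace ℝ ι => |x i|).rpow_const
      fun _ => Or.inr (by linarith))
  even x := by simp
  map_smul c hc x := by
    simp only [PiLp.smul_apply, smul_eq_mul, abs_mul, abs_of_pos hc,
      Real.mul_rpow hc.le (abs_nonneg _), Finset.mul_sum]
    exact Finset.sum_congr rfl fun i _ => by ring
  exists_second_difference_le := by
    have hβ' : 0 ≤ β * (β - 1) := by nlinarith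
    refine ⟨∑ i, |a i| * (2 * (β * (β - 1))), fun y p hp => ?_⟩
    simp only [PiLp.add_apply, PiLp.sub_apply, Finset.mul_sum, Finset.sum_mul,
      ← Finset.sum_add_distrib, ← Finset.sum_sub_distrib]
    refine (Finset.abs_sum_le_sum_abs _ _).trans (Finset.sum_le_sum fun i _ => ?_)
    have hyi : |y i| ≤ ‖y‖ := PiLp.norm_apply_le y i
    have hpi : |p i| ≤ ‖p‖ := PiLp.norm_apply_le p i
    calc |a i * |y i + p i| ^ β + a i * |y i - p i| ^ β - 2 * (a i * |y i| ^ β)|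
        = |a i| * |(|y i + p i| ^ β + |y i - p i| ^ β - 2 * |y i| ^ β)| := by
          rw [← abs_mul]; ring_nf
      _ ≤ |a i| * (2 * (β * (β - 1)) * (1 + |y i|) ^ β * p i ^ 2) := by
          gcongr
          exact abs_rpow_second_difference_le hβ (hpi.trans hp)
      _ ≤ |a i| * (2 * (β * (β - 1)) * (1 + ‖y‖) ^ β * ‖p‖ ^ 2) := by
          rw [← sq_abs (p i)]
          gcongr
      _ = |a i| * (2 * (β * (β - 1))) * (1 + ‖y‖) ^ β * ‖p‖ ^ 2 := by ring

lemma integral_coord_mul_radial_eq (φ w : ℝ → ℝ) (i j : ι) :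
    ∫ x : EuclideanSpace ℝ ι, φ (x i) * w ‖x‖ = ∫ x : EuclideanSpace ℝ ι, φ (x j) * w ‖x‖ := by
  classical
  let e := LinearIsometryEquiv.piLpCongrLeft 2 ℝ ℝ (Equiv.swap i j)
  rw [← e.measurePreserving.integral_comp e.toHomeomorph.measurableEmbedding
    fun x => φ (x j) * w ‖x‖]
  refine integral_congr_ae (.of_forall fun x => ?_)
  have hcoord : e x j = x i := by
    simp [e, LinearIsometryEquiv.piLpCongrLeft_apply, Equiv.piCongrLeft'_apply]
  simp only [e.norm_map, hcoord]

lemma integrable_abs_coord_rpow_mul (hβ : 0 ≤ β) (hβι : β < Fintype.card ι) (i : ι) :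
    Integrable fun x : EuclideanSpace ℝ ι =>
      |x i| ^ β * (1 + ‖x‖ ^ 2) ^ (-(Fintype.card ι : ℝ)) := by
  refine integrable_mul_of_growth_of_decay (A := 1) (γ := β) (ρ := 2 * Fintype.card ι)
    (B := (2 * (1 + 1⁻¹)) ^ (Fintype.card ι : ℝ)) (by rw [finrank_euclideanSpace]; linarith)
    ((by fun_prop : Continuous fun x : EuclideanSpace ℝ ι => |x i|).rpow_const fun _ => Or.inr hβ)
    (Continuous.rpow_const (by fun_prop) fun x => Or.inl (by positivity)) (fun x => ?_) fun x => ?_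
  · rw [one_mul, abs_of_nonneg (by positivity)]
    gcongr
    exact (PiLp.norm_apply_le x i).trans (by linarith)
  · have hbase : (1 + ‖x‖ ^ 2) ^ (-(Fintype.card ι : ℝ)) =
        bubbleBase 1 ‖x‖ ^ (Fintype.card ι : ℝ) := by
      rw [bubbleBase, one_pow, one_mul, one_div, Real.inv_rpow (by positivity),
        Real.rpow_neg (by positivity)]
    rw [abs_of_nonneg (by positivity), hbase]
    exact bubbleBase_rpow_le (by positivity) one_pos (norm_nonneg x)

lemma integral_sum_mul_abs_coord_rpow_mul (hβ : 0 ≤ β) (hβι : β < Fintype.card ι) (a : ι → ℝ)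
    (i₀ : ι) :
    ∫ x : EuclideanSpace ℝ ι,
        (∑ i, a i * |x i| ^ β) * (1 + ‖x‖ ^ 2) ^ (-(Fintype.card ι : ℝ)) =
      (∑ i, a i) * ∫ x : EuclideanSpace ℝ ι,
        |x i₀| ^ β * (1 + ‖x‖ ^ 2) ^ (-(Fintype.card ι : ℝ)) := by
  simp only [Finset.sum_mul, mul_assoc]
  rw [integral_finsetSum _ fun i _ => (integrable_abs_coord_rpow_mul hβ hβι i).const_mul (a i)]
  refine Finset.sum_congr rfl fun i _ => ?_
  rw [integral_const_mul, integral_coord_mul_radial_eq (|·| ^ β)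
    (fun r => (1 + r ^ 2) ^ (-(Fintype.card ι : ℝ))) i i₀]

end CoordinatePowers

namespace KHyp

variable {n k : ℕ} {β : ℝ} {a : Fin n → ℝ} {K : EuclideanSpace ℝ (Fin n) → ℝ}

lemma continuous (hK : KHyp n k β a K) : Continuous K := hK.2.1.continuous

lemma exists_abs_le (hK : KHyp n k β a K) : ∃ B, ∀ x, |K x| ≤ B := by
  obtain ⟨⟨K₀, K₁, hK₀, hbd⟩, -⟩ := hK
  exact ⟨K₁, fun x => (abs_of_pos (hK₀.trans_le (hbd x).1)).trans_le (hbd x).2⟩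

lemma isLittleO (hβ : β ≠ 0) (hK : KHyp n k β a K) :
    (fun x => K x - K 0 - ∑ i, a i * |x i| ^ β) =o[𝓝 0] fun x => ‖x‖ ^ β := by
  obtain ⟨-, -, -, -, hK0, -, -, -, R, hexpand, -, -, hR⟩ := hK
  have hpunctured : (fun x => K x - K 0 - ∑ i, a i * |x i| ^ β) =o[𝓝[≠] 0] fun x => ‖x‖ ^ β := by
    refine isLittleO_iff.2 fun η hη => ?_
    filter_upwards [hR.eventually_le_const hη, self_mem_nhdsWithin,
      hexpand.filter_mono nhdsWithin_le_nhds] with x hx hx₀ hKx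
    have hpos : 0 < ‖x‖ := norm_pos_iff.2 hx₀
    have hterm := (Finset.single_le_sum
      (f := fun j : ℕ => ‖iteratedFDeriv ℝ j R x‖ * ‖x‖ ^ (-β + (j : ℝ))) (fun j _ => by positivity)
      (Finset.mem_range.2 ⌊β⌋₊.succ_pos)).trans hx
    rw [norm_iteratedFDeriv_zero, Nat.cast_zero, add_zero, Real.rpow_neg hpos.le,
      ← div_eq_mul_inv, div_le_iff₀ (by positivity)] at hterm
    have hKR : K x - K 0 - ∑ i, a i * |x i| ^ β = R x := by rw [hKx, hK0]; ring
    rwa [hKR, Real.norm_of_nonneg (by positivity : 0 ≤ ‖x‖ ^ β)]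
  rw [← nhdsNE_sup_pure]
  exact hpunctured.sup (isLittleO_pure.2 (by simp [hβ]))

lemma periodic (hK : KHyp n k β a K) {q : Fin n → ℤ} (hq : ∀ j : Fin n, k ≤ (j : ℕ) → q j = 0)
    {v : EuclideanSpace ℝ (Fin n)} (hv : ∀ j, v j = q j) : Function.Periodic K v := by
  have hsum : v = ∑ j, q j • EuclideanSpace.single j (1 : ℝ) := by
    ext i
    simp [hv, Pi.single_apply]
  rw [hsum]
  refine Finset.sum_induction _ _ (fun _ _ => Function.Periodic.add_period) (by simp) fun j _ => ?_
  rcases lt_or_ge (j : ℕ) k with hj | hj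
  · exact Function.Periodic.zsmul (fun x => hK.2.2.2.1 x j hj) _
  · simp [hq j hj]

lemma periodic_inv_smul_of_latticeEnum (hK : KHyp n k β a K) {m l : ℕ} {lam : ℝ}
    {X : Fin ((m + 1) ^ k) → EuclideanSpace ℝ (Fin n)} (hX : latticeEnum n k m (lam * l) X)
    (i : Fin ((m + 1) ^ k)) : Function.Periodic K (lam⁻¹ • X i) := by
  rcases eq_or_ne lam 0 with rfl | hlam
  · simp
  obtain ⟨q, -, hq, hXq⟩ := hX.2.1 i
  refine hK.periodic (q := fun j => l * q j) (fun j hj => by simp [hq j hj]) fun j => ?_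
  simp [hXq, mul_assoc, hlam]

end KHyp

theorem stmt_15_general {n : ℕ} (i₀ : Fin n) {s β C₀ C₁ C₂ : ℝ} (hs : 2 * s < n) (hβ : 2 < β)
    (hβn : β < n) (hC₀ : 0 < C₀) (hC₁ : 0 < C₁) (hC₁₂ : C₁ ≤ C₂) {a : Fin n → ℝ}
    {K : EuclideanSpace ℝ (Fin n) → ℝ} (hKc : Continuous K) (hKb : ∃ B, ∀ x, |K x| ≤ B)
    (hKa : (fun x => K x - K 0 - ∑ i, a i * |x i| ^ β) =o[𝓝 0] fun x => ‖x‖ ^ β) :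
    ∃ C > 0, ∀ ε > 0, ∀ᶠ lam : ℝ in atTop, ∀ ξ, Function.Periodic K (lam⁻¹ • ξ) →
      ∀ P, ‖P - ξ‖ ≤ 1 → ∀ b ∈ Icc C₁ C₂,
        |(∫ x, K (lam⁻¹ • x) *
              (C₀ * bubbleBase b ‖x - P‖ ^ ((n - 2 * s) / 2)) ^ ((n + 2 * s) / (n - 2 * s)) *
              deriv (fun b => C₀ * bubbleBase b ‖x - P‖ ^ ((n - 2 * s) / 2)) b) +
            (n - 2 * s) / (2 * n) * β * C₀ ^ (2 * n / (n - 2 * s)) * (∑ h, a h) *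
              b ^ (-(β + 1)) * lam ^ (-β) *
              ∫ x : EuclideanSpace ℝ (Fin n), |x i₀| ^ β * (1 + ‖x‖ ^ 2) ^ (-(n : ℝ))| ≤
          C * ‖P - ξ‖ ^ 2 * lam ^ (-β) + ε * lam ^ (-β) := by
  have hn : (0 : ℝ) < n := by linarith
  have hns : 0 < n - 2 * s := sub_pos.2 hs
  have hβ₀ : 0 ≤ β := by linarith
  set κ : ℝ := (n - 2 * s) / (2 * n) * C₀ ^ (2 * n / (n - 2 * s)) with hκ
  have hκ₀ : 0 < κ := by positivity
  obtain ⟨C, hC, hmain⟩ := exists_forall_eventually_abs_integral_mul_dilationKernel_add_le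
    (volume : Measure (EuclideanSpace ℝ (Fin n))) (isHomogeneousModel_sum_mul_abs_rpow hβ a) hβ₀
    (by simpa using hβn) hC₁ hC₁₂ hKc hKb hKa
  have hJ := integral_sum_mul_abs_coord_rpow_mul hβ₀ (by simpa using hβn) a i₀
  rw [Fintype.card_fin] at hJ
  simp only [finrank_euclideanSpace_fin, hJ] at hmain
  refine ⟨κ * C, by positivity, fun ε hε => ?_⟩
  filter_upwards [hmain (ε / κ) (by positivity)] with lam hlam ξ hξ P hP b hb
  rw [integral_mul_bubble_rpow_mul_deriv_eq hn.ne' hns.ne' hC₀ (hC₁.trans_le hb.1) hξ, ← hκ]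
  set I := ∫ y, K (lam⁻¹ • (y + (P - ξ))) * dilationKernel n b ‖y‖
  set J := ∫ x : EuclideanSpace ℝ (Fin n), |x i₀| ^ β * (1 + ‖x‖ ^ 2) ^ (-(n : ℝ))
  calc _ = κ * |I + β * b ^ (-(β + 1)) * lam ^ (-β) * ((∑ h, a h) * J)| := by
        rw [← abs_of_pos hκ₀, ← abs_mul, abs_of_pos hκ₀, hκ]
        ring_nf
    _ ≤ κ * ((C * ‖P - ξ‖ ^ 2 + ε / κ) * lam ^ (-β)) := by
        gcongr
        exact hlam b hb _ hP
    _ = κ * C * ‖P - ξ‖ ^ 2 * lam ^ (-β) + ε * lam ^ (-β) := by field_simp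

theorem stmt_15 (n k : ℕ) (s β C₀ C₁ C₂ : ℝ) (hn0 : 0 < n) (hs0 : 0 < s) (hs1 : s < 1)
    (hn : 2 * s + 2 < (n : ℝ)) (hk1 : 1 ≤ k) (hk2 : (k : ℝ) < ((n : ℝ) - 2 * s) / 2)
    (hβ1 : (n : ℝ) - 2 * s < β) (hβ2 : β < (n : ℝ))
    (hC₀ : 0 < C₀) (hC₁ : 0 < C₁) (hC₁₂ : C₁ < C₂)
    (a : Fin n → ℝ) (K : EuclideanSpace ℝ (Fin n) → ℝ) (hK : KHyp n k β a K)
    (ε : ℝ) (hε : 0 < ε) :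
    ∃ C > (0 : ℝ), ∃ l₀ : ℕ, ∀ l : ℕ, l₀ ≤ l → ∀ m : ℕ, 1 ≤ m →
      ∀ lam : ℝ, lam = (l : ℝ) ^ (((n : ℝ) - 2 * s) / (β - (n : ℝ) + 2 * s)) →
      ∀ X : Fin ((m + 1) ^ k) → EuclideanSpace ℝ (Fin n), latticeEnum n k m (lam * l) X →
      ∀ P : Fin ((m + 1) ^ k) → EuclideanSpace ℝ (Fin n), (∀ i, ‖P i - X i‖ < 1 / 2) →
      ∀ Λ : Fin ((m + 1) ^ k) → ℝ, (∀ i, Λ i ∈ Set.Icc C₁ C₂) →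
      ∀ i : Fin ((m + 1) ^ k),
        |(∫ x : EuclideanSpace ℝ (Fin n),
              K (lam⁻¹ • x) *
                (C₀ * (Λ i / (1 + Λ i ^ 2 * ‖x - P i‖ ^ 2)) ^ (((n : ℝ) - 2 * s) / 2)) ^
                  (((n : ℝ) + 2 * s) / ((n : ℝ) - 2 * s)) *
                deriv (fun b : ℝ =>
                  C₀ * (b / (1 + b ^ 2 * ‖x - P i‖ ^ 2)) ^ (((n : ℝ) - 2 * s) / 2)) (Λ i)) +
            (((n : ℝ) - 2 * s) / (2 * n)) * β * C₀ ^ (2 * (n : ℝ) / ((n : ℝ) - 2 * s)) *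
              (∑ h, a h) * Λ i ^ (-(β + 1)) * lam ^ (-β) *
              ∫ x : EuclideanSpace ℝ (Fin n),
                |x ⟨0, hn0⟩| ^ β * (1 + ‖x‖ ^ 2) ^ (-(n : ℝ))| ≤
          C * ‖P i - X i‖ ^ (min 2 (β - 1)) * lam ^ (-β) + ε * lam ^ (-β) := by
  have hlim : Tendsto (fun l : ℕ => (l : ℝ) ^ (((n : ℝ) - 2 * s) / (β - n + 2 * s))) atTop atTop :=
    (tendsto_rpow_atTop (div_pos (by linarith) (by linarith))).comp tendsto_natCast_atTop_atTop
  obtain ⟨C, hC, hmain⟩ := stmt_15_general ⟨0, hn0⟩ (s := s) (by linarith) (by linarith) hβ2 hC₀ hC₁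
    hC₁₂.le hK.continuous hK.exists_abs_le (hK.isLittleO (by linarith))
  obtain ⟨l₀, hl₀⟩ := eventually_atTop.1 (hlim.eventually (hmain ε hε))
  refine ⟨C, hC, l₀, fun l hl m _ lam hlam X hX P hP Λ hΛ i => ?_⟩
  have hPi : ‖P i - X i‖ ≤ 1 := by linarith [hP i]
  subst hlam
  refine (hl₀ l hl (X i) (hK.periodic_inv_smul_of_latticeEnum hX i) (P i) hPi (Λ i) (hΛ i)).trans ?_
  gcongr
  rw [← Real.rpow_two]
  exact Real.rpow_le_rpow_of_exponent_ge_of_imp (norm_nonneg _) hPi (min_le_left _ _) (by simp)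
end
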